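/- arXiv:2402.10199 — 2 statements merged into one kernel-verified Lean document; each statement's English description precedes it below -/
import Mathlib

section
/- Assume Setting (C) and let μ ∈ M(X, σ_X) be an invariant Gibbs measure for f. Then: the sequence 𝓖 = {log g_n} is almost additive on Y if and only if there exists a bounded Borel measurable function ĝ on Y for which the push-forward measure πμ is the unique invariant Gibbs measure for ĝ. Moreover, if 𝓖 is merely weakly almost additive on Y, then there exists a bounded Borel measurable function ĝ on Y for which πμ is the unique invariant weak Gibbs measure for ĝ. -/
open MeasureTheory Filter Topology

noncomputable section

/-- The one-sided shift map. -/
def shift {A : Type*} : (ℕ → A) → ℕ → A := fun x i => x (i + 1)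

/-- A finite word appears in some point of `X`. -/
def AppearsIn {A : Type*} (X : Set (ℕ → A)) (w : List A) : Prop :=
  ∃ x ∈ X, ∃ m : ℕ, ∀ i : Fin w.length, x (m + i) = w.get i

/-- `X` is a (one-sided) subshift: a closed, shift-invariant set. -/
def IsSubshift {A : Type*} [TopologicalSpace A] (X : Set (ℕ → A)) : Prop :=
  IsClosed X ∧ shift '' X ⊆ X

/-- The weak specification property. -/
def WeakSpec {A : Type*} (X : Set (ℕ → A)) : Prop :=
  ∃ p : ℕ, ∀ u v : List A, AppearsIn X u → AppearsIn X v →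
    ∃ w : List A, w.length ≤ p ∧ AppearsIn X (u ++ w ++ v)

/-- The cylinder set `[x_1 … x_n]` inside `X`. -/
def cyl {A : Type*} (X : Set (ℕ → A)) (x : ℕ → A) (n : ℕ) : Set (ℕ → A) :=
  {z ∈ X | ∀ i < n, z i = x i}

/-- Birkhoff sum `(S_n g)(x)`. -/
def birk {A : Type*} (g : (ℕ → A) → ℝ) (n : ℕ) (x : ℕ → A) : ℝ :=
  ∑ i ∈ Finset.range n, g (shift^[i] x)

/-- `μ` is a shift-invariant Borel probability measure concentrated on `X`,
i.e. an element of `M(X, σ_X)`. -/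
def IsInvariantOn {A : Type*} [MeasurableSpace A] (μ : Measure (ℕ → A))
    (X : Set (ℕ → A)) : Prop :=
  IsProbabilityMeasure μ ∧ μ X = 1 ∧
    ∀ B : Set (ℕ → A), MeasurableSet B → μ (shift ⁻¹' B) = μ B

/-- `μ` is a Gibbs measure for the sequence `𝓕 = {log f_n}`. -/
def GibbsSeq {A : Type*} [MeasurableSpace A] (X : Set (ℕ → A))
    (f : ℕ → (ℕ → A) → ℝ) (μ : Measure (ℕ → A)) : Prop :=
  ∃ P C : ℝ, 0 < C ∧ ∀ x ∈ X, ∀ n : ℕ, 1 ≤ n →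
    C⁻¹ ≤ (μ (cyl X x n)).toReal / (Real.exp (-(n : ℝ) * P) * f n x) ∧
    (μ (cyl X x n)).toReal / (Real.exp (-(n : ℝ) * P) * f n x) ≤ C

/-- `μ` is a weak Gibbs measure for the sequence `𝓕 = {log f_n}`. -/
def WeakGibbsSeq {A : Type*} [MeasurableSpace A] (X : Set (ℕ → A))
    (f : ℕ → (ℕ → A) → ℝ) (μ : Measure (ℕ → A)) : Prop :=
  ∃ P : ℝ, ∃ C : ℕ → ℝ, (∀ n : ℕ, 1 ≤ n → 0 < C n) ∧
    Tendsto (fun n : ℕ => Real.log (C n) / n) atTop (𝓝 0) ∧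
    ∀ x ∈ X, ∀ n : ℕ, 1 ≤ n →
      (C n)⁻¹ ≤ (μ (cyl X x n)).toReal / (Real.exp (-(n : ℝ) * P) * f n x) ∧
      (μ (cyl X x n)).toReal / (Real.exp (-(n : ℝ) * P) * f n x) ≤ C n

/-- `μ` is a Gibbs measure for the (Borel measurable) function `g`. -/
def GibbsFun {A : Type*} [MeasurableSpace A] (X : Set (ℕ → A))
    (g : (ℕ → A) → ℝ) (μ : Measure (ℕ → A)) : Prop :=
  GibbsSeq X (fun n x => Real.exp (birk g n x)) μ

/-- `μ` is a weak Gibbs measure for the (Borel measurable) function `g`. -/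
def WeakGibbsFun {A : Type*} [MeasurableSpace A] (X : Set (ℕ → A))
    (g : (ℕ → A) → ℝ) (μ : Measure (ℕ → A)) : Prop :=
  WeakGibbsSeq X (fun n x => Real.exp (birk g n x)) μ

/-- The sequence `{log f_n}` is almost additive on `X` with constant `C`. -/
def AAOn {A : Type*} (X : Set (ℕ → A)) (f : ℕ → (ℕ → A) → ℝ) (C : ℝ) : Prop :=
  ∀ x ∈ X, ∀ n m : ℕ, 1 ≤ n → 1 ≤ m →
    Real.exp (-C) * (f n x * f m (shift^[n] x)) ≤ f (n + m) x ∧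
    f (n + m) x ≤ Real.exp C * (f n x * f m (shift^[n] x))

/-- The sequence `{log f_n}` is weakly almost additive on `X`. -/
def WeakAAOn {A : Type*} (X : Set (ℕ → A)) (f : ℕ → (ℕ → A) → ℝ) : Prop :=
  ∃ C : ℕ → ℝ, (∀ n : ℕ, 1 ≤ n → 0 < C n) ∧
    Tendsto (fun n : ℕ => C n / n) atTop (𝓝 0) ∧
    ∀ x ∈ X, ∀ n m : ℕ, 1 ≤ n → 1 ≤ m →
      Real.exp (-(C n)) * (f n x * f m (shift^[n] x)) ≤ f (n + m) x ∧
      f (n + m) x ≤ Real.exp (C n) * (f n x * f m (shift^[n] x))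

open scoped Classical

/-- `g_n(y) = sup_{E_n(y)} Σ_{x ∈ E_n(y)} e^{(S_n f)(x)}`: the sum, over all `n`-blocks
of `X` projecting to `y_1…y_n`, of the sup of `e^{S_n f}` over the corresponding
cylinder. -/
noncomputable def gseq {kX kY : ℕ} (X : Set (ℕ → Fin kX)) (πs : Fin kX → Fin kY)
    (f : (ℕ → Fin kX) → ℝ) (n : ℕ) (y : ℕ → Fin kY) : ℝ :=
  ∑ u : Fin n → Fin kX,
    if ((∃ x ∈ X, ∀ i : Fin n, x ↑i = u i) ∧ ∀ i : Fin n, πs (u i) = y ↑i) then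
      ⨆ x : ↥{z ∈ X | ∀ i : Fin n, z ↑i = u i}, Real.exp (birk f n ↑x)
    else 0

/-- `h_n(y) = sup_{E_n(y)} Σ_{x ∈ E_n(y)} e^{(S_{n-1} f)(x)}` for `n ≥ 2`, and
`h_1 = g_1`. -/
noncomputable def hseqS {kX kY : ℕ} (X : Set (ℕ → Fin kX)) (πs : Fin kX → Fin kY)
    (f : (ℕ → Fin kX) → ℝ) (n : ℕ) (y : ℕ → Fin kY) : ℝ :=
  if n ≤ 1 then gseq X πs f n y
  else
    ∑ u : Fin n → Fin kX,
      if ((∃ x ∈ X, ∀ i : Fin n, x ↑i = u i) ∧ ∀ i : Fin n, πs (u i) = y ↑i) then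
        ⨆ x : ↥{z ∈ X | ∀ i : Fin n, z ↑i = u i}, Real.exp (birk f (n - 1) ↑x)
      else 0

/-- Irreducibility of a subshift: any two words appearing in `X` can be connected. -/
def IrreducibleShift {A : Type*} (X : Set (ℕ → A)) : Prop :=
  ∀ u v : List A, AppearsIn X u → AppearsIn X v →
    ∃ w : List A, AppearsIn X (u ++ w ++ v)

/-- For a factor map collapsing all symbols except `0`, and a two-coordinate potential
given by `F`: `h_n(y)` is the sum over `n`-blocks `x_1…x_n` of `X` with
`π(x_1)…π(x_n) = y_1…y_n` of `e^{F(x_1,x_2)+⋯+F(x_{n-1},x_n)}` (for `n ≥ 2`), and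
`h_1(y) = Σ_{a : π(a) = y_1} sup_{x ∈ [a]} e^{f(x)}`. -/
noncomputable def hseqC {l : ℕ} (X : Set (ℕ → Fin l)) (πs : Fin l → Fin 2)
    (F : Fin l → Fin l → ℝ) (f : (ℕ → Fin l) → ℝ) (n : ℕ) (y : ℕ → Fin 2) : ℝ :=
  if n ≤ 1 then
    ∑ a : Fin l,
      if πs a = y 0 then (⨆ x : ↥{z ∈ X | z 0 = a}, Real.exp (f ↑x)) else 0
  else
    ∑ u : Fin n → Fin l,
      if ((∃ x ∈ X, ∀ i : Fin n, x ↑i = u i) ∧ ∀ i : Fin n, πs (u i) = y ↑i) then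
        Real.exp (∑ i : Fin n,
          if h : (↑i + 1 : ℕ) < n then F (u i) (u ⟨↑i + 1, h⟩) else 0)
      else 0

/-- The one-block map of Setting (C): symbol `1` (here `0`) goes to `1` (here `0`),
symbols `2, 3` (here `1, 2`) go to `2` (here `1`). -/
def projC {l : ℕ} : Fin l → Fin 2 := fun a => if (a : ℕ) = 0 then 0 else 1

/-- The matrix `M(i,j) = e^{f[ij]} a_{ij}` of Setting (C). -/
noncomputable def MC {l : ℕ} (A : Fin l → Fin l → ℕ) (F : Fin l → Fin l → ℝ) :
    Fin l → Fin l → ℝ := fun i j => Real.exp (F i j) * (A i j : ℝ)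

/-- Similarity of `2 × 2` real matrices. -/
def Similar2 (M N : Matrix (Fin 2) (Fin 2) ℝ) : Prop :=
  ∃ P : Matrix (Fin 2) (Fin 2) ℝ, IsUnit P.det ∧ N = P⁻¹ * M * P


/-- restriction to the first `n` coordinates -/
def rs {A : Type*} (n : ℕ) : (ℕ → A) → (Fin n → A) := fun y i => y i

lemma rs_eq_iff {A : Type*} {n : ℕ} {y z : ℕ → A} : rs n y = rs n z ↔ ∀ i < n, y i = z i := by
  constructor
  · intro h i hi
    exact congrFun h ⟨i, hi⟩
  · intro h
    funext i
    exact h i i.2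

lemma measurable_rs {k : ℕ} (n : ℕ) : Measurable (rs n : (ℕ → Fin k) → _) := by
  unfold rs
  fun_prop

lemma measurable_shift {k : ℕ} : Measurable (shift : (ℕ → Fin k) → _) := by
  unfold shift
  fun_prop

lemma measurableSet_rs {k : ℕ} (n : ℕ) (S : Set (Fin n → Fin k)) :
    MeasurableSet (rs n ⁻¹' S : Set (ℕ → Fin k)) :=
  measurable_rs n (Set.toFinite S).measurableSet

lemma shift_iter {A : Type*} (n : ℕ) (y : ℕ → A) (i : ℕ) : (shift^[n] y) i = y (n + i) := by
  induction n generalizing y with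
  | zero => simp
  | succ n ih =>
    rw [Function.iterate_succ_apply, ih]
    unfold shift
    congr 1
    omega

lemma measure_rs {k : ℕ} (m : Measure (ℕ → Fin k)) (n : ℕ) (S : Finset (Fin n → Fin k)) :
    m (rs n ⁻¹' (S : Set (Fin n → Fin k))) = ∑ w ∈ S, m (rs n ⁻¹' {w}) :=
  (sum_measure_preimage_singleton S (fun _ _ => measurableSet_rs n _)).symm

lemma isOpen_eq_iUnion {k : ℕ} {U : Set (ℕ → Fin k)} (hU : IsOpen U) :
    ∃ S : ∀ n : ℕ, Finset (Fin n → Fin k),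
      U = ⋃ n, rs n ⁻¹' (S n : Set (Fin n → Fin k)) ∧
      Monotone (fun n => (rs n ⁻¹' (S n : Set (Fin n → Fin k)) : Set (ℕ → Fin k))) := by
  refine ⟨fun n => Finset.univ.filter (fun w => rs n ⁻¹' {w} ⊆ U), ?_, ?_⟩
  · ext y
    simp only [Finset.coe_filter, Finset.mem_univ, true_and, Set.mem_iUnion, Set.mem_preimage,
      Set.mem_ofPred_eq]
    constructor
    · intro hy
      obtain ⟨I, u, hu, hsub⟩ := isOpen_pi_iff.1 hU y hy
      refine ⟨I.sup id + 1, ?_⟩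
      intro z hz
      apply hsub
      intro i hi
      have h1 : i ≤ I.sup id := Finset.le_sup (f := id) hi
      have : z i = y i := rs_eq_iff.1 hz i (by omega)
      rw [this]
      exact (hu i hi).2
    · rintro ⟨n, hn⟩
      exact hn rfl
  · intro a b hab y hy
    simp only [Finset.coe_filter, Finset.mem_univ, true_and, Set.mem_preimage,
      Set.mem_ofPred_eq] at hy ⊢
    refine subset_trans ?_ hy
    intro z hz
    exact rs_eq_iff.2 (fun i hi => rs_eq_iff.1 hz i (by omega))

lemma measure_le_of_cyl {k : ℕ} (m1 m2 : Measure (ℕ → Fin k)) [IsFiniteMeasure m1]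
    [IsFiniteMeasure m2]
    (h : ∀ n : ℕ, 1 ≤ n → ∀ w : Fin n → Fin k, m1 (rs n ⁻¹' {w}) ≤ m2 (rs n ⁻¹' {w})) :
    m1 ≤ m2 := by
  refine Measure.le_iff.2 fun B _ => ?_
  refine ENNReal.le_of_forall_pos_le_add fun ε hε _ => ?_
  obtain ⟨U, hBU, hUo, hU⟩ := B.exists_isOpen_le_add m2
    (ENNReal.coe_ne_zero.2 hε.ne')
  refine le_trans ?_ hU
  refine (measure_mono hBU).trans ?_
  obtain ⟨S, hS, hmono⟩ := isOpen_eq_iUnion hUo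
  have ht : Tendsto (fun n => m1 (rs n ⁻¹' (S n : Set (Fin n → Fin k)))) atTop (𝓝 (m1 U)) := by
    conv_rhs => rw [hS]
    exact tendsto_measure_iUnion_atTop hmono
  refine le_of_tendsto ht ?_
  filter_upwards [eventually_ge_atTop 1] with n hn
  rw [measure_rs]
  refine (Finset.sum_le_sum fun w _ => h n hn w).trans ?_
  rw [← measure_rs]
  refine measure_mono ?_
  conv_rhs => rw [hS]
  exact Set.subset_iUnion (fun n => (rs n ⁻¹' (S n : Set (Fin n → Fin k)))) n

/-- Bounded relative entropy on cylinders. -/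
lemma ac_of_entropy {k : ℕ} (m1 m2 : Measure (ℕ → Fin k)) [IsFiniteMeasure m1]
    [IsFiniteMeasure m2] (φ : ℝ → ℝ) 
    (hφ : Tendsto φ (𝓝[>] 0) (𝓝 0))
    (h : ∀ n : ℕ, 1 ≤ n → ∀ S : Finset (Fin n → Fin k), ∀ ε : ℝ, 0 < ε → 
      (m2 (rs n ⁻¹' S)).toReal ≤ ε → (m1 (rs n ⁻¹' S)).toReal ≤ φ ε) :
    m1 ≪ m2 := by
  intro B hB
  have key : ∀ ε : ℝ, 0 < ε → (m1 B).toReal ≤ φ ε := by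
    intro ε hε
    obtain ⟨U, hBU, hUo, hU⟩ := B.exists_isOpen_le_add m2
      (ε := ENNReal.ofReal ε) (by simpa using hε)
    rw [hB, zero_add] at hU
    refine (ENNReal.toReal_mono (measure_ne_top _ _) (measure_mono hBU)).trans ?_
    obtain ⟨S, hS, hmono⟩ := isOpen_eq_iUnion hUo
    have ht : Tendsto (fun n => (m1 (rs n ⁻¹' (S n : Set (Fin n → Fin k)))).toReal) atTop
        (𝓝 (m1 U).toReal) := by
      refine (ENNReal.tendsto_toReal (measure_ne_top _ _)).comp ?_
      conv_rhs => rw [hS]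
      exact tendsto_measure_iUnion_atTop hmono
    refine le_of_tendsto ht ?_
    filter_upwards [eventually_ge_atTop 1] with n hn
    apply h n hn _ ε hε
    refine ENNReal.toReal_le_of_le_ofReal hε.le (le_trans (measure_mono ?_) hU)
    conv_rhs => rw [hS]
    exact Set.subset_iUnion (fun n => (rs n ⁻¹' (S n : Set (Fin n → Fin k)))) n
  have h0 : (m1 B).toReal ≤ 0 := by
    refine ge_of_tendsto hφ ?_
    filter_upwards [self_mem_nhdsWithin] with ε hε
    exact key ε hε
  have h1 : (m1 B).toReal = 0 := le_antisymm h0 ENNReal.toReal_nonneg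
  rcases (ENNReal.toReal_eq_zero_iff _).1 h1 with h | h
  · exact h
  · exact absurd h (measure_ne_top _ _)

/-- Superadditivity of relative entropy -/
lemma entropy_super {α β : Type*} [Fintype α] [Fintype β] (r s : α × β → ℝ)
    (p p' : α → ℝ) (q q' : β → ℝ) (K : ℝ) (hK : 0 < K)
    (hr : ∀ x, 0 ≤ r x) (hs : ∀ x, 0 < r x → 0 < s x)
    (hp' : ∀ a, p' a = ∑ b, r (a, b)) (hq' : ∀ b, q' b = ∑ a, r (a, b))
    (hr1 : ∑ x, r x = 1)
    (hp : ∀ a, 0 ≤ p a) (hq : ∀ b, 0 ≤ q b)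
    (hsub : ∀ a b, s (a, b) ≤ K * (p a * q b)) :
    ∑ a, p' a * Real.log (p' a / p a) + ∑ b, q' b * Real.log (q' b / q b) - Real.log K
      ≤ ∑ x, r x * Real.log (r x / s x) := by
  have hp1 : ∑ a, p' a = 1 := by
    simp_rw [hp']
    rw [← hr1, Fintype.sum_prod_type]
  have hq1 : ∑ b, q' b = 1 := by
    simp_rw [hq']
    rw [← hr1, Fintype.sum_prod_type_right]
  have e1 : ∑ a, p' a * Real.log (p' a / p a) = ∑ x : α × β, r x * Real.log (p' x.1 / p x.1) := by
    rw [Fintype.sum_prod_type]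
    refine Finset.sum_congr rfl fun a _ => ?_
    dsimp only
    rw [← Finset.sum_mul, ← hp']
  have e2 : ∑ b, q' b * Real.log (q' b / q b) = ∑ x : α × β, r x * Real.log (q' x.2 / q x.2) := by
    rw [Fintype.sum_prod_type_right]
    refine Finset.sum_congr rfl fun b _ => ?_
    dsimp only
    rw [← Finset.sum_mul, ← hq']
  have e3 : Real.log K = ∑ x : α × β, r x * Real.log K := by
    rw [← Finset.sum_mul, hr1, one_mul]
  have e4 : ∑ x : α × β, (r x - p' x.1 * q' x.2) = 0 := by
    rw [Finset.sum_sub_distrib, hr1, Fintype.sum_prod_type]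
    simp_rw [← Finset.mul_sum, hq1]
    simp [hp1]
  rw [e1, e2, e3, ← Finset.sum_add_distrib, ← Finset.sum_sub_distrib, ← add_zero (∑ x, _), ← e4,
    ← Finset.sum_add_distrib]
  refine Finset.sum_le_sum fun x _ => ?_
  obtain ⟨a, b⟩ := x
  have hp0 : r (a, b) ≤ p' a := by
    rw [hp']
    exact Finset.single_le_sum (f := fun b => r (a, b)) (fun _ _ => hr _) (Finset.mem_univ b)
  have hq0 : r (a, b) ≤ q' b := by
    rw [hq']
    exact Finset.single_le_sum (f := fun a => r (a, b)) (fun _ _ => hr _) (Finset.mem_univ a)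
  rcases (hr (a, b)).eq_or_lt with h0 | h0
  · rw [← h0] at hp0 hq0 ⊢
    simp
    positivity
  · have hs0 := hs _ h0
    have hp'0 : 0 < p' a := by linarith
    have hq'0 : 0 < q' b := by linarith
    have hpq : 0 < p a * q b := by
      by_contra hc
      have := hsub a b
      nlinarith
    have hpa : 0 < p a := by
      rcases (hp a).eq_or_lt with h | h
      · rw [← h] at hpq; simp at hpq
      · exact h
    have hqb : 0 < q b := by
      rcases (hq b).eq_or_lt with h | h
      · rw [← h] at hpq; simp at hpq
      · exact h
    have hl : Real.log (s (a, b)) ≤ Real.log K + (Real.log (p a) + Real.log (q b)) := by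
      rw [← Real.log_mul hpa.ne' hqb.ne', ← Real.log_mul hK.ne' hpq.ne']
      exact Real.log_le_log hs0 (hsub a b)
    have hl2 : Real.log (p' a * q' b / r (a, b)) ≤ p' a * q' b / r (a, b) - 1 :=
      Real.log_le_sub_one_of_pos (by positivity)
    have hl3 : r (a, b) * Real.log (p' a * q' b / r (a, b)) ≤ p' a * q' b - r (a, b) := by
      have := mul_le_mul_of_nonneg_left hl2 h0.le
      have e : r (a, b) * (p' a * q' b / r (a, b) - 1) = p' a * q' b - r (a, b) := by
        field_simp
      linarith
    rw [Real.log_div (by positivity) h0.ne', Real.log_mul hp'0.ne' hq'0.ne'] at hl3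
    simp only
    rw [Real.log_div hp'0.ne' hpa.ne', Real.log_div hq'0.ne' hqb.ne', Real.log_div h0.ne' hs0.ne']
    nlinarith [mul_le_mul_of_nonneg_left hl h0.le]

/-- lower bound on relative entropy by a set -/
lemma entropy_set {α : Type*} [Fintype α] (r s : α → ℝ) (D ε : ℝ) (hε : 0 < ε) (hε1 : ε < 1)
    (hr : ∀ x, 0 ≤ r x) (hs' : ∀ x, 0 ≤ s x) (hs : ∀ x, 0 < r x → 0 < s x)
    (hr1 : ∑ x, r x = 1) (hs1 : ∑ x, s x = 1) 
    (hD : ∑ x, r x * Real.log (r x / s x) ≤ D) (S : Finset α) (hS : ∑ x ∈ S, s x ≤ ε) :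
    (∑ x ∈ S, r x) ≤ (D + 1) / (- Real.log ε) := by
  rw [le_div_iff₀ (by have := Real.log_neg hε hε1; linarith)]
  have h1 : ∑ x, ((if x ∈ S then r x * (-Real.log ε) else 0) + r x - 
      (if x ∈ S then s x / ε else 0) - s x) ≤ ∑ x, r x * Real.log (r x / s x) := by
    refine Finset.sum_le_sum fun x _ => ?_
    rcases (hr x).eq_or_lt with h0 | h0
    · rw [← h0]
      have := hs' x
      have : 0 ≤ s x / ε := by positivity
      split_ifs <;> simp <;> linarith
    · have hs0 := hs x h0
      split_ifs with hx
      · have h2 : Real.log (s x / ε / r x) ≤ s x / ε / r x - 1 := 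
          Real.log_le_sub_one_of_pos (by positivity)
        have h3 := mul_le_mul_of_nonneg_left h2 h0.le
        have e : r x * (s x / ε / r x - 1) = s x / ε - r x := by field_simp
        rw [e, Real.log_div (by positivity) h0.ne', Real.log_div hs0.ne' hε.ne'] at h3
        rw [Real.log_div h0.ne' hs0.ne']
        nlinarith
      · have h2 : Real.log (s x / r x) ≤ s x / r x - 1 := 
          Real.log_le_sub_one_of_pos (by positivity)
        have h3 := mul_le_mul_of_nonneg_left h2 h0.le
        have e : r x * (s x / r x - 1) = s x - r x := by field_simp
        rw [e, Real.log_div hs0.ne' h0.ne'] at h3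
        rw [Real.log_div h0.ne' hs0.ne']
        nlinarith
  rw [Finset.sum_sub_distrib, Finset.sum_sub_distrib, Finset.sum_add_distrib, hr1, hs1,
    ← Finset.sum_filter, ← Finset.sum_filter, ← Finset.sum_mul, ← Finset.sum_div] at h1
  have e : Finset.univ.filter (fun x => x ∈ S) = S := by ext; simp
  rw [e] at h1
  have : (∑ x ∈ S, s x) / ε ≤ 1 := by rwa [div_le_one hε]
  linarith

/-- probability of a word -/
def pr {k : ℕ} (m : Measure (ℕ → Fin k)) (n : ℕ) (w : Fin n → Fin k) : ℝ :=
  (m (rs n ⁻¹' {w})).toReal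

lemma pr_nonneg {k : ℕ} (m : Measure (ℕ → Fin k)) (n : ℕ) (w : Fin n → Fin k) : 0 ≤ pr m n w :=
  ENNReal.toReal_nonneg

lemma sum_pr {k : ℕ} (m : Measure (ℕ → Fin k)) [IsFiniteMeasure m] (n : ℕ)
    (S : Finset (Fin n → Fin k)) :
    ∑ w ∈ S, pr m n w = (m (rs n ⁻¹' (S : Set (Fin n → Fin k)))).toReal := by
  unfold pr
  rw [measure_rs, ENNReal.toReal_sum]
  intro a _
  exact measure_ne_top _ _

lemma sum_pr_univ {k : ℕ} (m : Measure (ℕ → Fin k)) [IsProbabilityMeasure m] (n : ℕ) :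
    ∑ w, pr m n w = 1 := by
  rw [sum_pr]
  simp

lemma rs_append {k n l : ℕ} (a : Fin n → Fin k) (b : Fin l → Fin k) :
    (rs (n + l) ⁻¹' {Fin.append a b} : Set (ℕ → Fin k)) =
      rs n ⁻¹' {a} ∩ (fun y => rs l (shift^[n] y)) ⁻¹' {b} := by
  ext y
  simp only [Set.mem_preimage, Set.mem_singleton_iff, Set.mem_inter_iff]
  constructor
  · intro h
    constructor
    · funext i
      have := congrFun h (Fin.castAdd l i)
      simpa [rs] using this
    · funext i
      have := congrFun h (Fin.natAdd n i)
      simpa [rs, shift_iter] using this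
  · rintro ⟨h1, h2⟩
    funext i
    refine Fin.addCases (fun i => ?_) (fun i => ?_) i
    · rw [Fin.append_left, ← h1]
      simp [rs]
    · rw [Fin.append_right, ← h2]
      simp [rs, shift_iter]

lemma marg_left {k n l : ℕ} (m : Measure (ℕ → Fin k)) [IsFiniteMeasure m] (a : Fin n → Fin k) :
    pr m n a = ∑ b : Fin l → Fin k, pr m (n + l) (Fin.append a b) := by
  unfold pr
  rw [← ENNReal.toReal_sum (fun _ _ => measure_ne_top _ _)]
  congr 1
  have hm : Measurable (fun y : ℕ → Fin k => rs l (shift^[n] y)) :=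
    (measurable_rs l).comp (measurable_shift.iterate n)
  have := sum_measure_preimage_singleton (μ := m.restrict (rs n ⁻¹' {a}))
    (f := fun y => rs l (shift^[n] y)) (Finset.univ : Finset (Fin l → Fin k))
    (fun b _ => hm (measurableSet_singleton b))
  simp only [Finset.coe_univ, Set.preimage_univ, Measure.restrict_apply_univ] at this
  rw [← this]
  refine Finset.sum_congr rfl fun b _ => ?_
  rw [rs_append, Measure.restrict_apply (hm (measurableSet_singleton b)), Set.inter_comm]

lemma marg_right {k n l : ℕ} (m : Measure (ℕ → Fin k)) [IsFiniteMeasure m]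
    (hm : MeasurePreserving shift m m) (b : Fin l → Fin k) :
    pr m l b = ∑ a : Fin n → Fin k, pr m (n + l) (Fin.append a b) := by
  unfold pr
  rw [← ENNReal.toReal_sum (fun _ _ => measure_ne_top _ _)]
  congr 1
  have hm' : Measurable (fun y : ℕ → Fin k => rs l (shift^[n] y)) :=
    (measurable_rs l).comp (measurable_shift.iterate n)
  have := sum_measure_preimage_singleton
    (μ := m.restrict ((fun y => rs l (shift^[n] y)) ⁻¹' {b}))
    (f := rs n) (Finset.univ : Finset (Fin n → Fin k))
    (fun b _ => measurableSet_rs n _)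
  simp only [Finset.coe_univ, Set.preimage_univ, Measure.restrict_apply_univ] at this
  have h2 : m (rs l ⁻¹' {b}) = m ((fun y => rs l (shift^[n] y)) ⁻¹' {b}) :=
    ((hm.iterate n).measure_preimage (measurableSet_rs l {b}).nullMeasurableSet).symm
  rw [h2, ← this]
  refine Finset.sum_congr rfl fun a _ => ?_
  rw [rs_append, Measure.restrict_apply (measurableSet_rs n _)]

/-- relative entropy of words of length `n` -/
def Dn {k : ℕ} (m' m : Measure (ℕ → Fin k)) (n : ℕ) : ℝ :=
  ∑ w : Fin n → Fin k, pr m' n w * Real.log (pr m' n w / pr m n w)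

lemma Dn_super {k : ℕ} (m' m : Measure (ℕ → Fin k)) [IsProbabilityMeasure m']
    [IsProbabilityMeasure m] (hinv : MeasurePreserving shift m' m') (K : ℝ) (hK : 0 < K)
    (n l : ℕ) 
    (hpos : ∀ w : Fin (n + l) → Fin k, 0 < pr m' (n + l) w → 0 < pr m (n + l) w)
    (hsub : ∀ (a : Fin n → Fin k) (b : Fin l → Fin k),
      pr m (n + l) (Fin.append a b) ≤ K * (pr m n a * pr m l b)) :
    Dn m' m n + Dn m' m l - Real.log K ≤ Dn m' m (n + l) := by
  have h := entropy_super (α := Fin n → Fin k) (β := Fin l → Fin k)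
    (fun x => pr m' (n + l) (Fin.append x.1 x.2)) (fun x => pr m (n + l) (Fin.append x.1 x.2))
    (pr m n) (pr m' n) (pr m l) (pr m' l) K hK (fun _ => pr_nonneg _ _ _) (fun _ h => hpos _ h)
    (fun a => marg_left m' a) (fun b => marg_right m' hinv b)
    (by
      rw [← sum_pr_univ m' n, Fintype.sum_prod_type]
      exact Finset.sum_congr rfl fun a _ => (marg_left m' a).symm)
    (pr_nonneg _ _) (pr_nonneg _ _) hsub
  unfold Dn
  refine h.trans (le_of_eq ?_)
  exact Fintype.sum_equiv (Fin.appendEquiv n l) _ _ (fun x => rfl)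

lemma ac_of_weak {k : ℕ} (m' m : Measure (ℕ → Fin k)) [IsProbabilityMeasure m']
    [IsProbabilityMeasure m] (hinv : MeasurePreserving shift m' m') (K : ℝ) (hK : 0 < K)
    (hsub : ∀ n l : ℕ, 1 ≤ n → 1 ≤ l → ∀ (a : Fin n → Fin k) (b : Fin l → Fin k),
      pr m (n + l) (Fin.append a b) ≤ K * (pr m n a * pr m l b))
    (T : ℕ → ℝ) (hT : Tendsto (fun n : ℕ => T n / n) atTop (𝓝 0))
    (hle : ∀ n : ℕ, 1 ≤ n → ∀ w : Fin n → Fin k, pr m' n w ≤ Real.exp (T n) * pr m n w) :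
    m' ≪ m := by
  have hpos : ∀ n : ℕ, 1 ≤ n → ∀ w : Fin n → Fin k, 0 < pr m' n w → 0 < pr m n w := by
    intro n hn w hw
    have := hle n hn w
    by_contra hc
    nlinarith [Real.exp_pos (T n)]
  have hup : ∀ n : ℕ, 1 ≤ n → Dn m' m n ≤ T n := by
    intro n hn
    have : ∑ w : Fin n → Fin k, pr m' n w * T n = T n := by
      rw [← Finset.sum_mul, sum_pr_univ, one_mul]
    rw [← this]
    refine Finset.sum_le_sum fun w _ => ?_
    rcases (pr_nonneg m' n w).eq_or_lt with h0 | h0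
    · rw [← h0]; simp
    · refine mul_le_mul_of_nonneg_left ?_ h0.le
      have h1 := hpos n hn w h0
      rw [Real.log_le_iff_le_exp (by positivity), div_le_iff₀ h1]
      exact hle n hn w
  have hmul : ∀ n : ℕ, 1 ≤ n → ∀ j : ℕ, 
      ((j : ℝ) + 1) * (Dn m' m n - Real.log K) ≤ Dn m' m ((j + 1) * n) - Real.log K := by
    intro n hn j
    induction j with
    | zero => simp
    | succ j ih =>
      have h1 : 1 ≤ (j + 1) * n := Nat.one_le_iff_ne_zero.2 (by positivity)
      have := Dn_super m' m hinv K hK ((j + 1) * n) n (hpos _ (by omega))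
        (hsub _ _ h1 hn)
      have e : (j + 1 + 1) * n = (j + 1) * n + n := by ring
      rw [e]
      push_cast
      linarith
  have hbd : ∀ n : ℕ, 1 ≤ n → Dn m' m n ≤ Real.log K := by
    intro n hn
    by_contra! hc
    have hn0 : (0 : ℝ) < n := by exact_mod_cast hn
    have ht : Tendsto (fun j : ℕ => (j + 1) * n) atTop atTop :=
      tendsto_atTop_mono (fun j => by simp only [id]; nlinarith) tendsto_id
    have h1 := hT.comp ht
    have h2 : Tendsto (fun j : ℕ => (-Real.log K) / (((j + 1) * n : ℕ) : ℝ)) atTop (𝓝 0) :=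
      (tendsto_const_div_atTop_nhds_zero_nat (-Real.log K)).comp ht
    have h3 := h1.add h2
    simp only [add_zero, Function.comp_def] at h3
    have h4 : (Dn m' m n - Real.log K) / n ≤ 0 := by
      refine ge_of_tendsto' h3 fun j => ?_
      have hj := hmul n hn j
      have hj2 := hup ((j + 1) * n) (Nat.one_le_iff_ne_zero.2 (by positivity))
      rw [← add_div, div_le_div_iff₀ hn0 (by positivity)]
      push_cast
      nlinarith
    have : 0 < (Dn m' m n - Real.log K) / n := div_pos (by linarith) hn0
    linarith
  refine ac_of_entropy m' m 
    (fun ε => if ε < 1 then (Real.log K + 1) / (-Real.log ε) else 1) ?_ ?_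
  · have h1 : Tendsto (fun ε => (Real.log K + 1) / (-Real.log ε)) (𝓝[>] 0) (𝓝 0) :=
      Tendsto.const_div_atTop (tendsto_neg_atBot_atTop.comp Real.tendsto_log_nhdsGT_zero) _
    refine h1.congr' ?_
    have : ∀ᶠ ε : ℝ in 𝓝[>] 0, ε < 1 := nhdsWithin_le_nhds (eventually_lt_nhds one_pos)
    filter_upwards [this] with ε hε
    rw [if_pos hε]
  · intro n hn S ε hε hS
    split_ifs with h1
    · rw [← sum_pr] at hS ⊢
      exact entropy_set (pr m' n) (pr m n) (Real.log K) ε hε h1 (pr_nonneg _ _) (pr_nonneg _ _)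
        (hpos n hn) (sum_pr_univ _ _) (sum_pr_univ _ _) (hbd n hn) S hS
    · exact ENNReal.toReal_le_of_le_ofReal zero_le_one (by simpa using prob_le_one)

/-- supremum of `e^{S_n f}` on a cylinder (`0` when the cylinder is empty) -/
def Tn {k : ℕ} (X : Set (ℕ → Fin k)) (f : (ℕ → Fin k) → ℝ) (n : ℕ) (u : Fin n → Fin k) : ℝ :=
  ⨆ x : ↥{z ∈ X | ∀ i : Fin n, z ↑i = u i}, Real.exp (birk f n ↑x)

lemma gseq_eq {k l : ℕ} (X : Set (ℕ → Fin k)) (πs : Fin k → Fin l) (f : (ℕ → Fin k) → ℝ) (n : ℕ)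
    (y : ℕ → Fin l) :
    gseq X πs f n y = ∑ u : Fin n → Fin k, if (∀ i : Fin n, πs (u i) = y i) then Tn X f n u
      else 0 := by
  unfold gseq
  refine Finset.sum_congr rfl fun u _ => ?_
  by_cases h1 : ∃ x ∈ X, ∀ i : Fin n, x ↑i = u i
  · simp only [h1, true_and]
    rfl
  · have : IsEmpty ↥{z ∈ X | ∀ i : Fin n, z ↑i = u i} := by
      refine ⟨fun x => h1 ⟨x.1, x.2.1, x.2.2⟩⟩
    simp only [h1, false_and, if_false, Tn]
    rw [Real.iSup_of_isEmpty]
    simp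

lemma Tn_nonneg {k : ℕ} (X : Set (ℕ → Fin k)) (f : (ℕ → Fin k) → ℝ) (n : ℕ) (u : Fin n → Fin k) :
    0 ≤ Tn X f n u := Real.iSup_nonneg fun _ => (Real.exp_pos _).le

lemma birk_succ {A : Type*} (g : (ℕ → A) → ℝ) (n : ℕ) (x : ℕ → A) :
    birk g (n + 1) x = g x + birk g n (shift x) := by
  unfold birk
  rw [Finset.sum_range_succ', add_comm]
  simp [Function.iterate_succ_apply]

lemma birk_add {A : Type*} (g : (ℕ → A) → ℝ) (n m : ℕ) (x : ℕ → A) :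
    birk g (n + m) x = birk g n x + birk g m (shift^[n] x) := by
  unfold birk
  rw [Finset.sum_range_add]
  congr 1
  refine Finset.sum_congr rfl fun i _ => ?_
  rw [add_comm n i, Function.iterate_add_apply]

lemma birk_bound {A : Type*} (g : (ℕ → A) → ℝ) (B : ℝ) (hB : ∀ x, |g x| ≤ B) (n : ℕ) (x : ℕ → A) :
    |birk g n x| ≤ n * B := by
  unfold birk
  refine (Finset.abs_sum_le_sum_abs _ _).trans ?_
  refine (Finset.sum_le_sum fun i _ => hB _).trans ?_
  simp

section SFT

variable {A : Fin 3 → Fin 3 → ℕ} {X : Set (ℕ → Fin 3)} {F : Fin 3 → Fin 3 → ℝ}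
  {f : (ℕ → Fin 3) → ℝ}

/-- transition vectors -/
def Vn (A : Fin 3 → Fin 3 → ℕ) (F : Fin 3 → Fin 3 → ℝ) (E : Fin 3 → ℝ) :
    ℕ → (ℕ → Fin 2) → Fin 3 → ℝ
  | 0, y, a => if projC a = y 0 then E a else 0
  | n + 1, y, a => if projC a = y 0 then
      ∑ b : Fin 3, (A a b : ℝ) * (Real.exp (F a b) * Vn A F E n (shift y) b) else 0

/-- one-letter weights -/
def En (X : Set (ℕ → Fin 3)) (f : (ℕ → Fin 3) → ℝ) (a : Fin 3) : ℝ := Tn X f 1 (fun _ => a)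

lemma exists_bound (hf : ∀ x : ℕ → Fin 3, f x = F (x 0) (x 1)) : ∃ B : ℝ, 0 ≤ B ∧ ∀ x, |f x| ≤ B := by
  refine ⟨∑ a, ∑ b, |F a b|, by positivity, fun x => ?_⟩
  rw [hf]
  refine le_trans ?_ (Finset.single_le_sum (f := fun a => ∑ b, |F a b|) (fun _ _ => by positivity)
    (Finset.mem_univ (x 0)))
  exact Finset.single_le_sum (f := fun b => |F (x 0) b|) (fun _ _ => by positivity)
    (Finset.mem_univ (x 1))

lemma Tn_bdd (hf : ∀ x : ℕ → Fin 3, f x = F (x 0) (x 1)) (n : ℕ) (u : Fin n → Fin 3) :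
    BddAbove (Set.range fun x : ↥{z ∈ X | ∀ i : Fin n, z ↑i = u i} => Real.exp (birk f n ↑x)) := by
  obtain ⟨B, _, hB⟩ := exists_bound hf
  refine ⟨Real.exp (n * B), ?_⟩
  rintro _ ⟨x, rfl⟩
  exact Real.exp_le_exp.2 ((le_abs_self _).trans (birk_bound f B hB n _))

lemma le_Tn (hf : ∀ x : ℕ → Fin 3, f x = F (x 0) (x 1)) (n : ℕ) (u : Fin n → Fin 3)
    (x : ℕ → Fin 3) (hx : x ∈ X) (hxu : ∀ i : Fin n, x i = u i) :
    Real.exp (birk f n x) ≤ Tn X f n u :=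
  le_ciSup (Tn_bdd hf n u) (⟨x, hx, hxu⟩ : ↥{z ∈ X | ∀ i : Fin n, z ↑i = u i})

lemma shift_mem (hXdef : X = {x | ∀ n : ℕ, A (x n) (x (n + 1)) = 1}) {x : ℕ → Fin 3} (hx : x ∈ X) :
    shift x ∈ X := by
  subst hXdef
  intro n
  exact hx (n + 1)

lemma shift_iter_mem (hXdef : X = {x | ∀ n : ℕ, A (x n) (x (n + 1)) = 1}) {x : ℕ → Fin 3}
    (hx : x ∈ X) (n : ℕ) : shift^[n] x ∈ X := by
  induction n generalizing x with
  | zero => exact hx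
  | succ n ih => exact ih (shift_mem hXdef hx)

/-- prepend a letter -/
def consSeq {B : Type*} (a : B) (x : ℕ → B) : ℕ → B
  | 0 => a
  | n + 1 => x n

lemma Tn_cons (hA01 : ∀ i j, A i j = 0 ∨ A i j = 1)
    (hXdef : X = {x | ∀ n : ℕ, A (x n) (x (n + 1)) = 1})
    (hf : ∀ x : ℕ → Fin 3, f x = F (x 0) (x 1)) (n : ℕ) (a : Fin 3) (u : Fin (n + 1) → Fin 3) :
    Tn X f (n + 1 + 1) (Fin.cons a u) = 
      (A a (u 0) : ℝ) * (Real.exp (F a (u 0)) * Tn X f (n + 1) u) := by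
  rcases hA01 a (u 0) with h | h
  · have : IsEmpty ↥{z ∈ X | ∀ i : Fin (n + 1 + 1), z ↑i = (Fin.cons a u : Fin (n + 2) → Fin 3) i} := by
      refine ⟨fun x => ?_⟩
      have h1 := x.2.2 0
      have h2 := x.2.2 1
      have h3 : ∀ z ∈ X, ∀ n : ℕ, A (z n) (z (n + 1)) = 1 := by
        rw [hXdef]; exact fun z hz => hz
      have h4 := h3 _ x.2.1 0
      have e1 : (Fin.cons a u : Fin (n + 1 + 1) → Fin 3) 1 = u 0 := 
        Fin.cons_succ (α := fun _ => Fin 3) a u 0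
      rw [e1] at h2
      simp at h1 h2
      simp [h1, h2, h] at h4
    unfold Tn
    rw [Real.iSup_of_isEmpty, h]
    simp
  · rw [h, Nat.cast_one, one_mul]
    unfold Tn
    rw [Real.mul_iSup_of_nonneg (Real.exp_pos _).le]
    refine Function.Surjective.iSup_congr
      (fun x => ⟨shift x.1, shift_mem hXdef x.2.1, fun i => ?_⟩) ?_ ?_
    · have := x.2.2 i.succ
      simpa [shift] using this
    · rintro ⟨z, hz, hzu⟩
      refine ⟨⟨consSeq a z, ?_, ?_⟩, ?_⟩
      · subst hXdef
        intro m
        cases m with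
        | zero => 
          have := hzu 0
          simp at this
          simp [consSeq, this, h]
        | succ m => exact hz m
      · intro i
        refine Fin.cases ?_ (fun i => ?_) i
        · simp [consSeq]
        · simp [consSeq, hzu]
      · simp only [Subtype.mk.injEq]
        rfl
    · rintro ⟨z, hz, hzu⟩
      dsimp only
      rw [birk_succ f (n + 1) z, Real.exp_add, hf]
      have h1 := hzu 0
      have h2 := hzu 1
      have e1 : (Fin.cons a u : Fin (n + 1 + 1) → Fin 3) 1 = u 0 := 
        Fin.cons_succ (α := fun _ => Fin 3) a u 0
      rw [e1] at h2
      simp at h1 h2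
      rw [h1, h2]

lemma Vn_eq (hA01 : ∀ i j, A i j = 0 ∨ A i j = 1)
    (hXdef : X = {x | ∀ n : ℕ, A (x n) (x (n + 1)) = 1})
    (hf : ∀ x : ℕ → Fin 3, f x = F (x 0) (x 1)) (n : ℕ) (y : ℕ → Fin 2) (a : Fin 3) :
    (∑ u : Fin n → Fin 3, if (∀ i : Fin (n + 1), 
        projC ((Fin.cons a u : Fin (n + 1) → Fin 3) i) = y i) then
      Tn X f (n + 1) (Fin.cons a u) else 0) = Vn A F (En X f) n y a := by
  induction n generalizing y a with
  | zero =>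
    have e : ∀ u : Fin 0 → Fin 3, (Fin.cons a u : Fin 1 → Fin 3) = fun _ => a := by
      intro u
      funext i
      have : i = 0 := Fin.ext (by have := i.2; simp)
      rw [this]
      rfl
    simp only [e, Vn, En]
    simp
  | succ n ih =>
    rw [Vn]
    rw [← Fintype.sum_equiv (Fin.consEquiv (fun _ : Fin (n + 1) => Fin 3)) 
      (fun x => if (∀ i : Fin (n + 2), 
        projC ((Fin.cons a (Fin.cons x.1 x.2 : Fin (n + 1) → Fin 3) : Fin (n + 2) → Fin 3) i) = y i) then
      Tn X f (n + 1 + 1) (Fin.cons a (Fin.cons x.1 x.2 : Fin (n + 1) → Fin 3)) else 0) _ 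
      (fun x => rfl), Fintype.sum_prod_type]
    have hc : ∀ u : Fin (n + 1) → Fin 3, (∀ i : Fin (n + 2),
        projC ((Fin.cons a u : Fin (n + 2) → Fin 3) i) = y i) ↔
        (projC a = y 0 ∧ ∀ i : Fin (n + 1), projC (u i) = shift y i) := by
      intro u
      rw [Fin.forall_fin_succ]
      simp [shift]
    simp only [hc]
    by_cases h : projC a = y 0
    · simp only [h, true_and, if_true]
      refine Finset.sum_congr rfl fun b _ => ?_
      rw [← ih, Finset.mul_sum, Finset.mul_sum]
      refine Finset.sum_congr rfl fun u _ => ?_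
      split_ifs
      · rw [Tn_cons hA01 hXdef hf]
        simp
      · simp
    · simp [h]

lemma gseq_V (hA01 : ∀ i j, A i j = 0 ∨ A i j = 1)
    (hXdef : X = {x | ∀ n : ℕ, A (x n) (x (n + 1)) = 1})
    (hf : ∀ x : ℕ → Fin 3, f x = F (x 0) (x 1)) (n : ℕ) (y : ℕ → Fin 2) :
    gseq X projC f (n + 1) y = ∑ a, Vn A F (En X f) n y a := by
  rw [gseq_eq, ← Fintype.sum_equiv (Fin.consEquiv (fun _ : Fin (n + 1) => Fin 3)) 
      (fun x => if (∀ i : Fin (n + 1), 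
        projC ((Fin.cons x.1 x.2 : Fin (n + 1) → Fin 3) i) = y i) then
      Tn X f (n + 1) (Fin.cons x.1 x.2 : Fin (n + 1) → Fin 3) else 0) _ 
      (fun x => rfl), Fintype.sum_prod_type]
  exact Finset.sum_congr rfl fun a _ => Vn_eq hA01 hXdef hf n y a

lemma Vn_nonneg {E : Fin 3 → ℝ} (hE : ∀ a, 0 ≤ E a) (n : ℕ) (y : ℕ → Fin 2) (a : Fin 3) :
    0 ≤ Vn A F E n y a := by
  induction n generalizing y a with
  | zero => unfold Vn; split_ifs; exacts [hE a, le_rfl]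
  | succ n ih => 
    unfold Vn
    split_ifs
    · exact Finset.sum_nonneg fun b _ => mul_nonneg (by positivity) 
        (mul_nonneg (Real.exp_pos _).le (ih _ _))
    · exact le_rfl

lemma projC_zero {a : Fin 3} : projC a = 0 ↔ a = 0 := by
  revert a; decide

lemma Vn_zero {E : Fin 3 → ℝ} (n : ℕ) (y : ℕ → Fin 2) (hy : y 0 = 0) (a : Fin 3) (ha : a ≠ 0) :
    Vn A F E n y a = 0 := by
  have : projC a ≠ y 0 := by rw [hy]; exact fun h => ha (projC_zero.1 h)
  cases n <;> simp [Vn, this]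

lemma Vn_split {E : Fin 3 → ℝ} (k m : ℕ) (y : ℕ → Fin 2) (hy : y k = 0) (a : Fin 3) :
    Vn A F E (k + m) y a * Vn A F E 0 (shift^[k] y) 0 =
      Vn A F E k y a * Vn A F E m (shift^[k] y) 0 := by
  induction k generalizing y a with
  | zero =>
    by_cases ha : a = 0
    · subst ha
      simp [mul_comm]
    · rw [Vn_zero _ y hy a ha, Vn_zero _ y hy a ha]
      simp
  | succ k ih =>
    rw [show k + 1 + m = (k + m) + 1 by ring]
    have e : ∀ n, Vn A F E (n + 1) y a = if projC a = y 0 then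
      ∑ b : Fin 3, (A a b : ℝ) * (Real.exp (F a b) * Vn A F E n (shift y) b) else 0 := fun n => rfl
    rw [e, e]
    split_ifs with h
    · rw [Finset.sum_mul, Finset.sum_mul]
      refine Finset.sum_congr rfl fun b _ => ?_
      have := ih (shift y) hy b
      rw [← Function.iterate_succ_apply] at this
      rw [mul_assoc, mul_assoc, this, mul_assoc, mul_assoc]
    · simp

lemma gseq_zero (hA01 : ∀ i j, A i j = 0 ∨ A i j = 1)
    (hXdef : X = {x | ∀ n : ℕ, A (x n) (x (n + 1)) = 1})
    (hf : ∀ x : ℕ → Fin 3, f x = F (x 0) (x 1)) (n : ℕ) (y : ℕ → Fin 2) (hy : y 0 = 0) :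
    gseq X projC f (n + 1) y = Vn A F (En X f) n y 0 := by
  rw [gseq_V hA01 hXdef hf]
  exact Finset.sum_eq_single 0 (fun a _ ha => Vn_zero _ y hy a ha) (by simp)

/-- exact splitting of `g` at a zero -/
lemma gseq_split (hA01 : ∀ i j, A i j = 0 ∨ A i j = 1)
    (hXdef : X = {x | ∀ n : ℕ, A (x n) (x (n + 1)) = 1})
    (hf : ∀ x : ℕ → Fin 3, f x = F (x 0) (x 1)) (k m : ℕ) (y : ℕ → Fin 2) (hy : y k = 0) :
    gseq X projC f (k + m + 1) y * gseq X projC f 1 (shift^[k] y) =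
      gseq X projC f (k + 1) y * gseq X projC f (m + 1) (shift^[k] y) := by
  have h0 : (shift^[k] y) 0 = 0 := by rw [shift_iter]; exact hy
  rw [gseq_V hA01 hXdef hf (k + m), gseq_V hA01 hXdef hf k, gseq_zero hA01 hXdef hf m _ h0,
    show (1 : ℕ) = 0 + 1 from rfl, gseq_zero hA01 hXdef hf 0 _ h0, Finset.sum_mul, Finset.sum_mul]
  exact Finset.sum_congr rfl fun a _ => Vn_split k m y hy a

lemma gseq_nonneg {k l : ℕ} (X : Set (ℕ → Fin k)) (πs : Fin k → Fin l) (f : (ℕ → Fin k) → ℝ) (n : ℕ)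
    (y : ℕ → Fin l) : 0 ≤ gseq X πs f n y := by
  rw [gseq_eq]
  refine Finset.sum_nonneg fun u _ => ?_
  split_ifs
  exacts [Tn_nonneg _ _ _ _, le_rfl]

lemma gseq_submul (hXdef : X = {x | ∀ n : ℕ, A (x n) (x (n + 1)) = 1})
    (hf : ∀ x : ℕ → Fin 3, f x = F (x 0) (x 1)) (n m : ℕ) (y : ℕ → Fin 2) :
    gseq X projC f (n + m) y ≤ gseq X projC f n y * gseq X projC f m (shift^[n] y) := by
  rw [gseq_eq, gseq_eq, gseq_eq, Finset.sum_mul_sum, ← Fintype.sum_equiv (Fin.appendEquiv n m)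
    (fun x => if (∀ i : Fin (n + m), projC (Fin.append x.1 x.2 i) = y i) then 
      Tn X f (n + m) (Fin.append x.1 x.2) else 0) _ (fun x => rfl), Fintype.sum_prod_type]
  refine Finset.sum_le_sum fun a _ => Finset.sum_le_sum fun b _ => ?_
  by_cases h : ∀ i : Fin (n + m), projC (Fin.append a b i) = y i
  · have h1 : ∀ i : Fin n, projC (a i) = y i := fun i => by simpa using h (Fin.castAdd m i)
    have h2 : ∀ i : Fin m, projC (b i) = (shift^[n] y) i := fun i => by 
      simpa [shift_iter] using h (Fin.natAdd n i)
    rw [if_pos h, if_pos h1, if_pos h2]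
    refine Real.iSup_le ?_ (mul_nonneg (Tn_nonneg _ _ _ _) (Tn_nonneg _ _ _ _))
    rintro ⟨x, hx, hxu⟩
    dsimp only
    rw [birk_add, Real.exp_add]
    refine mul_le_mul (le_Tn hf n a x hx fun i => ?_) 
      (le_Tn hf m b _ (shift_iter_mem hXdef hx n) fun i => ?_) (Real.exp_pos _).le 
      (Tn_nonneg _ _ _ _)
    · simpa using hxu (Fin.castAdd m i)
    · simpa [shift_iter] using hxu (Fin.natAdd n i)
  · rw [if_neg h]
    refine mul_nonneg ?_ ?_ <;> split_ifs <;> first | exact Tn_nonneg _ _ _ _ | exact le_rfl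

end SFT

lemma cyl_pr {k : ℕ} (m : Measure (ℕ → Fin k)) (Y : Set (ℕ → Fin k)) (hYm : MeasurableSet Y)
    (hinv : IsInvariantOn m Y) (x : ℕ → Fin k) (n : ℕ) :
    (m (cyl Y x n)).toReal = pr m n (rs n x) := by
  have := hinv.1
  have e : cyl Y x n = Y ∩ rs n ⁻¹' {rs n x} := by
    ext z
    constructor
    · rintro ⟨h1, h2⟩
      exact ⟨h1, rs_eq_iff.2 h2⟩
    · rintro ⟨h1, h2⟩
      exact ⟨h1, rs_eq_iff.1 h2⟩
  unfold pr
  rw [e]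
  congr 1
  have h0 : m Yᶜ = 0 := (prob_compl_eq_zero_iff hYm).2 hinv.2.1
  refine measure_congr ?_
  have : (Y : Set (ℕ → Fin k)) =ᵐ[m] Set.univ := by
    rw [ae_eq_univ]; exact h0
  have h := this.inter (ae_eq_refl (rs n ⁻¹' {rs n x}))
  rwa [Set.univ_inter] at h

lemma inv_mp {k : ℕ} {m : Measure (ℕ → Fin k)} {Y : Set (ℕ → Fin k)} (hinv : IsInvariantOn m Y) :
    MeasurePreserving shift m m := by
  refine ⟨measurable_shift, ?_⟩
  ext B hB
  rw [Measure.map_apply measurable_shift hB, hinv.2.2 B hB]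

lemma exists_of_pr_pos {k : ℕ} {m : Measure (ℕ → Fin k)} {Y : Set (ℕ → Fin k)}
    (hYm : MeasurableSet Y) (hinv : IsInvariantOn m Y) {n : ℕ} {w : Fin n → Fin k}
    (h : 0 < pr m n w) : ∃ y ∈ Y, rs n y = w := by
  have := hinv.1
  by_contra! hc
  have h0 : m Yᶜ = 0 := (prob_compl_eq_zero_iff hYm).2 hinv.2.1
  have : m (rs n ⁻¹' {w}) = 0 := by
    refine measure_mono_null ?_ h0
    intro y hy hyY
    exact hc y hyY hy
  unfold pr at h
  rw [this] at h
  simp at h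

section SFT

variable {A : Fin 3 → Fin 3 → ℕ} {X : Set (ℕ → Fin 3)} {F : Fin 3 → Fin 3 → ℝ}
  {f : (ℕ → Fin 3) → ℝ}

lemma measurableSet_X (hXdef : X = {x | ∀ n : ℕ, A (x n) (x (n + 1)) = 1}) : MeasurableSet X := by
  subst hXdef
  have e : {x : ℕ → Fin 3 | ∀ n : ℕ, A (x n) (x (n + 1)) = 1} =
      ⋂ n : ℕ, (fun x : ℕ → Fin 3 => (x n, x (n + 1))) ⁻¹' {p | A p.1 p.2 = 1} := by
    ext x; simp
  rw [e]
  refine MeasurableSet.iInter fun n => ?_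
  have hm : Measurable (fun x : ℕ → Fin 3 => (x n, x (n + 1))) := by fun_prop
  exact hm (Set.toFinite _).measurableSet

/-- splice two points -/
def splice {B : Type*} (x : ℕ → B) (i : ℕ) (z : ℕ → B) : ℕ → B :=
  fun t => if t ≤ i then x t else z (t - i)

lemma splice_mem (hXdef : X = {x | ∀ n : ℕ, A (x n) (x (n + 1)) = 1}) {x z : ℕ → Fin 3}
    (hx : x ∈ X) (hz : z ∈ X) (i : ℕ) (h : x i = z 0) : splice x i z ∈ X := by
  subst hXdef
  intro n
  unfold splice
  rcases lt_trichotomy n i with h1 | h1 | h1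
  · rw [if_pos h1.le, if_pos (by omega)]
    exact hx n
  · subst h1
    rw [if_pos le_rfl, if_neg (by omega), h]
    have := hz 0
    simpa using this
  · rw [if_neg (by omega), if_neg (by omega)]
    have := hz (n - i)
    rwa [show n + 1 - i = n - i + 1 by omega]

lemma conn (hXdef : X = {x | ∀ n : ℕ, A (x n) (x (n + 1)) = 1}) (hXirr : IrreducibleShift X)
    (a b : Fin 3) : ∃ l : ℕ, ∀ x1 ∈ X, ∀ x2 ∈ X, ∀ n : ℕ, 1 ≤ n → x1 (n - 1) = a → x2 0 = b →
      ∃ x ∈ X, (∀ i < n, x i = x1 i) ∧ shift^[n + l] x = x2 := by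
  by_cases hab : AppearsIn X [a] ∧ AppearsIn X [b]
  · obtain ⟨w, z, hz, m0, hw⟩ := hXirr [a] [b] hab.1 hab.2
    refine ⟨w.length, ?_⟩
    intro x1 hx1 x2 hx2 n hn h1 h2
    have hza : z m0 = a := by
      have := hw ⟨0, by simp⟩
      simpa using this
    have hzb : z (m0 + (w.length + 1)) = b := by
      have := hw ⟨w.length + 1, by simp⟩
      simpa [List.getElem_append] using this
    have hz' := shift_iter_mem hXdef hz m0
    have hxx : splice x1 (n - 1) (shift^[m0] z) ∈ X := by
      refine splice_mem hXdef hx1 hz' _ ?_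
      rw [shift_iter, h1, add_zero, hza]
    have hxx2 : splice (splice x1 (n - 1) (shift^[m0] z)) (n + w.length) x2 ∈ X := by
      refine splice_mem hXdef hxx hx2 _ ?_
      rw [splice, if_neg (by omega), shift_iter, h2, ← hzb]
      congr 2
      omega
    refine ⟨_, hxx2, ?_, ?_⟩
    · intro i hi
      rw [splice, if_pos (by omega), splice, if_pos (by omega)]
    · funext i
      rw [shift_iter]
      cases i with
      | zero =>
        rw [splice, if_pos (by omega), splice, if_neg (by omega), shift_iter, h2, ← hzb]
        congr 2
        omega
      | succ i =>
        rw [splice, if_neg (by omega)]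
        congr 1
        omega
  · refine ⟨0, ?_⟩
    intro x1 hx1 x2 hx2 n hn h1 h2
    exfalso
    apply hab
    refine ⟨⟨x1, hx1, n - 1, ?_⟩, ⟨x2, hx2, 0, ?_⟩⟩
    · intro i
      have : i = ⟨0, by simp⟩ := Fin.ext (by have := i.2; simp)
      subst this
      simpa using h1
    · intro i
      have : i = ⟨0, by simp⟩ := Fin.ext (by have := i.2; simp)
      subst this
      simpa using h2

lemma gibbs_conn (hXdef : X = {x | ∀ n : ℕ, A (x n) (x (n + 1)) = 1}) (hXirr : IrreducibleShift X)
    (hf : ∀ x : ℕ → Fin 3, f x = F (x 0) (x 1))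
    (μ : Measure (ℕ → Fin 3)) (hμ : IsInvariantOn μ X) (P C : ℝ) (hC : 0 < C)
    (hG1 : ∀ x ∈ X, ∀ n : ℕ, 1 ≤ n → Real.exp (-(n : ℝ) * P + birk f n x) ≤ C * pr μ n (rs n x))
    (hG2 : ∀ x ∈ X, ∀ n : ℕ, 1 ≤ n → pr μ n (rs n x) ≤ C * Real.exp (-(n : ℝ) * P + birk f n x)) :
    ∃ p : ℕ, ∃ c : ℝ, 0 < c ∧ ∀ n m : ℕ, 1 ≤ n → 1 ≤ m → ∀ (u : Fin n → Fin 3) (v : Fin m → Fin 3),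
      ∃ l ≤ p, c * (pr μ n u * pr μ m v) ≤
        (μ (rs n ⁻¹' {u} ∩ (shift^[n + l]) ⁻¹' (rs m ⁻¹' {v}))).toReal := by
  have := hμ.1
  choose l hl using conn hXdef hXirr
  obtain ⟨B, hB0, hB⟩ := exists_bound hf
  set p := ∑ a, ∑ b, l a b with hp
  have hlp : ∀ a b, l a b ≤ p := fun a b => 
    (Finset.single_le_sum (f := fun b => l a b) (fun _ _ => by positivity)
      (Finset.mem_univ b)).trans (Finset.single_le_sum (f := fun a => ∑ b, l a b) 
      (fun _ _ => by positivity) (Finset.mem_univ a))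
  refine ⟨p, C⁻¹ * (C⁻¹ * C⁻¹ * Real.exp (-(p * (|P| + B)))), by positivity, ?_⟩
  intro n m hn hm u v
  rcases (pr_nonneg μ n u).eq_or_lt with hu | hu
  · exact ⟨0, by omega, by rw [← hu]; simp⟩
  rcases (pr_nonneg μ m v).eq_or_lt with hv | hv
  · exact ⟨0, by omega, by rw [← hv]; simp⟩
  obtain ⟨x1, hx1, rfl⟩ := exists_of_pr_pos (measurableSet_X hXdef) hμ hu
  obtain ⟨x2, hx2, rfl⟩ := exists_of_pr_pos (measurableSet_X hXdef) hμ hv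
  obtain ⟨x, hx, hxx1, hxx2⟩ := hl _ _ x1 hx1 x2 hx2 n hn rfl rfl
  set ℓ := l (x1 (n - 1)) (x2 0) with hℓ
  refine ⟨ℓ, hlp _ _, ?_⟩
  have hr1 : rs n x1 = rs n x := rs_eq_iff.2 fun i hi => (hxx1 i hi).symm
  have h1 := hG2 x hx n hn
  have h2 := hG2 x2 hx2 m hm
  have h3 := hG1 x hx (n + ℓ + m) (by omega)
  rw [birk_add, birk_add, hxx2] at h3
  have h4 : |birk f ℓ (shift^[n] x)| ≤ ℓ * B := birk_bound f B hB _ _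
  have hlpR : (ℓ : ℝ) ≤ p := by exact_mod_cast hlp _ _
  have h5 : -(p * (|P| + B)) ≤ -(ℓ : ℝ) * P + birk f ℓ (shift^[n] x) := by
    have a1 := neg_abs_le (birk f ℓ (shift^[n] x))
    have a2 : (ℓ : ℝ) * P ≤ ℓ * |P| := mul_le_mul_of_nonneg_left (le_abs_self P) (by positivity)
    have a3 : (ℓ : ℝ) * (|P| + B) ≤ p * (|P| + B) := 
      mul_le_mul_of_nonneg_right hlpR (by positivity)
    nlinarith
  have hsubset : rs (n + ℓ + m) ⁻¹' {rs (n + ℓ + m) x} ⊆ 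
      (rs n ⁻¹' {rs n x1} ∩ (shift^[n + ℓ]) ⁻¹' (rs m ⁻¹' {rs m x2}) : Set (ℕ → Fin 3)) := by
    intro z hz
    have hz' := rs_eq_iff.1 hz
    refine ⟨rs_eq_iff.2 fun i hi => ?_, rs_eq_iff.2 fun i hi => ?_⟩
    · rw [hz' i (by omega), hxx1 i hi]
    · rw [shift_iter, hz' _ (by omega), ← hxx2, shift_iter]
  have h6 : pr μ (n + ℓ + m) (rs (n + ℓ + m) x) ≤ (μ (rs n ⁻¹' {rs n x1} ∩ 
      (shift^[n + ℓ]) ⁻¹' (rs m ⁻¹' {rs m x2}))).toReal :=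
    ENNReal.toReal_mono (measure_ne_top _ _) (measure_mono hsubset)
  refine le_trans ?_ h6
  rw [hr1]
  have e : Real.exp (-((n + ℓ + m : ℕ) : ℝ) * P + (birk f n x + birk f ℓ (shift^[n] x) + birk f m x2))
      = Real.exp (-(n : ℝ) * P + birk f n x) * Real.exp (-(m : ℝ) * P + birk f m x2) *
        Real.exp (-(ℓ : ℝ) * P + birk f ℓ (shift^[n] x)) := by
    rw [← Real.exp_add, ← Real.exp_add]
    congr 1
    push_cast
    ring
  rw [e] at h3
  rw [mul_assoc, inv_mul_le_iff₀ hC]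
  refine le_trans ?_ h3
  have g1 : C⁻¹ * pr μ n (rs n x) ≤ Real.exp (-(n : ℝ) * P + birk f n x) := by
    rwa [inv_mul_le_iff₀ hC]
  have g2 : C⁻¹ * pr μ m (rs m x2) ≤ Real.exp (-(m : ℝ) * P + birk f m x2) := by
    rwa [inv_mul_le_iff₀ hC]
  have g3 := Real.exp_le_exp.2 h5
  have k1 := pr_nonneg μ n (rs n x)
  have k2 := pr_nonneg μ m (rs m x2)
  calc _ = (C⁻¹ * pr μ n (rs n x)) * (C⁻¹ * pr μ m (rs m x2)) * Real.exp (-(p * (|P| + B))) := by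
        ring
    _ ≤ _ := by gcongr

lemma ergodic_of_conn {k : ℕ} (μ : Measure (ℕ → Fin k)) [IsProbabilityMeasure μ]
    (hμ : MeasurePreserving shift μ μ) (p : ℕ) (c : ℝ) (hc : 0 < c)
    (h : ∀ n m : ℕ, 1 ≤ n → 1 ≤ m → ∀ (u : Fin n → Fin k) (v : Fin m → Fin k),
      ∃ l ≤ p, c * (pr μ n u * pr μ m v) ≤
        (μ (rs n ⁻¹' {u} ∩ (shift^[n + l]) ⁻¹' (rs m ⁻¹' {v}))).toReal) :
    Ergodic shift μ := by
  refine ⟨hμ, ⟨fun B hB hBinv => ?_⟩⟩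
  have hBn : ∀ n, shift^[n] ⁻¹' B = B := by
    intro n
    induction n with
    | zero => rfl
    | succ n ih => rw [Function.iterate_succ, Set.preimage_comp, ih, hBinv]
  have ofc : ∀ S T : Set (ℕ → Fin k), ENNReal.ofReal (c * ((μ S).toReal * (μ T).toReal)) = 
      ENNReal.ofReal c * μ S * μ T := by
    intro S T
    rw [ENNReal.ofReal_mul hc.le, ENNReal.ofReal_mul ENNReal.toReal_nonneg,
      ENNReal.ofReal_toReal (measure_ne_top _ _), ENNReal.ofReal_toReal (measure_ne_top _ _),
      mul_assoc]
  have key1 : ∀ n : ℕ, 1 ≤ n → ∀ u : Fin n → Fin k,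
      ENNReal.ofReal c * μ (rs n ⁻¹' {u}) * μ B ≤ (p + 1) * μ (rs n ⁻¹' {u} ∩ B) := by
    intro n hn u
    set m2 : Measure (ℕ → Fin k) := 
      ∑ l ∈ Finset.range (p + 1), (μ.restrict (rs n ⁻¹' {u})).map (shift^[n + l]) with hm2
    set m1 : Measure (ℕ → Fin k) := (ENNReal.ofReal c * μ (rs n ⁻¹' {u})) • μ with hm1
    have : IsFiniteMeasure m1 := 
      Measure.smul_finite _ (ENNReal.mul_ne_top ENNReal.ofReal_ne_top (measure_ne_top _ _))
    have : IsFiniteMeasure m2 := inferInstance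
    have app : ∀ S, MeasurableSet S → ∀ l, (μ.restrict (rs n ⁻¹' {u})).map (shift^[n + l]) S =
        μ (rs n ⁻¹' {u} ∩ (shift^[n + l]) ⁻¹' S) := by
      intro S hS l
      rw [Measure.map_apply (measurable_shift.iterate _) hS, 
        Measure.restrict_apply (measurable_shift.iterate _ hS), Set.inter_comm]
    have hle : m1 ≤ m2 := by
      refine measure_le_of_cyl _ _ fun m hm v => ?_
      obtain ⟨l, hlp, hl⟩ := h n m hn hm u v
      rw [hm1, hm2, Measure.smul_apply, Measure.finsetSum_apply, smul_eq_mul, ← ofc]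
      refine le_trans (ENNReal.ofReal_le_of_le_toReal hl) ?_
      rw [← app _ (measurableSet_rs _ _)]
      exact Finset.single_le_sum (f := fun l => (μ.restrict (rs n ⁻¹' {u})).map (shift^[n + l]) 
        (rs m ⁻¹' {v})) (fun _ _ => zero_le) (Finset.mem_range.2 (by omega))
    have := hle B
    rw [hm1, hm2, Measure.smul_apply, Measure.finsetSum_apply, smul_eq_mul] at this
    refine this.trans (le_of_eq ?_)
    simp only [app B hB, hBn]
    simp
  have key2 : (ENNReal.ofReal c * μ B) • μ ≤ ((p : ENNReal) + 1) • μ.restrict B := by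
    have : IsFiniteMeasure ((ENNReal.ofReal c * μ B) • μ) := 
      Measure.smul_finite _ (ENNReal.mul_ne_top ENNReal.ofReal_ne_top (measure_ne_top _ _))
    have : IsFiniteMeasure (((p : ENNReal) + 1) • μ.restrict B) := 
      Measure.smul_finite _ (by finiteness)
    refine measure_le_of_cyl _ _ fun n hn u => ?_
    have := key1 n hn u
    rw [Measure.smul_apply, Measure.smul_apply, Measure.restrict_apply (measurableSet_rs _ _)]
    simp only [smul_eq_mul]
    rwa [mul_right_comm]
  have h3 := key2 Bᶜ
  rw [Measure.smul_apply, Measure.smul_apply, Measure.restrict_apply hB.compl] at h3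
  simp at h3
  rw [eventuallyConst_set']
  rcases h3 with (h3 | h3) | h3
  · exact absurd h3 (not_le.2 hc)
  · left
    exact ae_eq_empty.2 h3
  · right
    exact ae_eq_univ.2 h3

end SFT

lemma fekete_two (u c : ℕ → ℝ) (hc : ∀ n, 1 ≤ n → 0 < c n)
    (hsub : ∀ n m, 1 ≤ n → 1 ≤ m → u (n + m) ≤ u n + u m)
    (hlow : ∀ n m, 1 ≤ n → 1 ≤ m → u n + u m - c n ≤ u (n + m)) :
    ∃ lam : ℝ, ∀ n : ℕ, 1 ≤ n → |u n - n * lam| ≤ c n := by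
  set v : ℕ → ℝ := fun n => if n = 0 then 0 else u n with hv
  have hvu : ∀ n, 1 ≤ n → v n = u n := fun n hn => by simp [hv]; omega
  have hs : Subadditive v := by
    intro m n
    rcases Nat.eq_zero_or_pos m with h | h
    · subst h; simp [hv]
    rcases Nat.eq_zero_or_pos n with h' | h'
    · subst h'; simp [hv]
    rw [hvu m h, hvu n h', hvu _ (by omega)]
    exact hsub m n h h'
  have hk : ∀ n, 1 ≤ n → ∀ k : ℕ, ((k : ℝ) + 1) * (u n - c n) ≤ u ((k + 1) * n) := by
    intro n hn k
    induction k with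
    | zero => simp; exact (hc n hn).le
    | succ k ih =>
      have := hlow n ((k + 1) * n) hn (Nat.one_le_iff_ne_zero.2 (by positivity))
      rw [show (k + 1 + 1) * n = n + (k + 1) * n by ring]
      push_cast
      nlinarith
  have hbdd : BddBelow (Set.range fun n => v n / n) := by
    refine ⟨min 0 (u 1 - c 1), ?_⟩
    rintro _ ⟨n, rfl⟩
    dsimp only
    rcases Nat.eq_zero_or_pos n with h | h
    · subst h; simp
    · rw [hvu n h]
      refine (min_le_right _ _).trans ?_
      obtain ⟨k, rfl⟩ : ∃ k, n = k + 1 := ⟨n - 1, by omega⟩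
      have := hk 1 le_rfl k
      rw [mul_one] at this
      rw [le_div_iff₀ (by positivity)]
      push_cast
      linarith
  refine ⟨hs.lim, fun n hn => ?_⟩
  have hn0 : (0 : ℝ) < n := by exact_mod_cast hn
  have h1 := hs.lim_le_div hbdd (n := n) (by omega)
  rw [hvu n hn, le_div_iff₀ hn0] at h1
  have h2 : (u n - c n) / n ≤ hs.lim := by
    have ht : Tendsto (fun j : ℕ => (j + 1) * n) atTop atTop :=
      tendsto_atTop_mono (fun j => by simp only [id]; nlinarith) tendsto_id
    refine ge_of_tendsto' ((hs.tendsto_lim hbdd).comp ht) fun k => ?_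
    have := hk n hn k
    simp only [Function.comp]
    rw [hvu _ (Nat.one_le_iff_ne_zero.2 (by positivity)), div_le_div_iff₀ hn0 (by positivity)]
    push_cast
    nlinarith
  rw [div_le_iff₀ hn0] at h2
  rw [abs_le]
  constructor <;> nlinarith [hc n hn]

/-- the potential on `Y` -/
def gh (L : ℕ → (ℕ → Fin 2) → ℝ) (lam : ℝ) (y : ℕ → Fin 2) : ℝ :=
  if h : ∃ k, 1 ≤ k ∧ y k = 0 then L (Nat.find h + 1) y - L (Nat.find h) (shift y)
  else if y 0 = 0 then 0 else lam

section GH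

variable {Y : Set (ℕ → Fin 2)} {L : ℕ → (ℕ → Fin 2) → ℝ} {lam : ℝ}

lemma gh_eq (hYs : ∀ y ∈ Y, shift y ∈ Y)
    (hsplit : ∀ y ∈ Y, ∀ k m, y k = 0 →
      L (k + m + 1) y + L 1 (shift^[k] y) = L (k + 1) y + L (m + 1) (shift^[k] y))
    (y : ℕ → Fin 2) (hy : y ∈ Y) (N : ℕ) (hN : 1 ≤ N) (hyN : y N = 0) :
    gh L lam y = L (N + 1) y - L N (shift y) := by
  have h : ∃ k, 1 ≤ k ∧ y k = 0 := ⟨N, hN, hyN⟩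
  rw [gh, dif_pos h]
  obtain ⟨h1, h2⟩ := Nat.find_spec h
  have h3 : Nat.find h ≤ N := Nat.find_min' h ⟨hN, hyN⟩
  generalize Nat.find h = k at *
  obtain ⟨m, rfl⟩ : ∃ m, N = k + m := ⟨N - k, by omega⟩
  obtain ⟨j, rfl⟩ : ∃ j, k = j + 1 := ⟨k - 1, by omega⟩
  have e1 := hsplit y hy (j + 1) m h2
  have e2 := hsplit (shift y) (hYs y hy) j m h2
  rw [← Function.iterate_succ_apply] at e2
  rw [show j + 1 + m = j + m + 1 by ring] at e1 ⊢
  simp only [Nat.succ_eq_add_one] at e2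
  linarith

lemma iter_mem (hYs : ∀ y ∈ Y, shift y ∈ Y) (y : ℕ → Fin 2) (hy : y ∈ Y) (n : ℕ) :
    shift^[n] y ∈ Y := by
  induction n generalizing y with
  | zero => exact hy
  | succ n ih => exact ih _ (hYs y hy)

lemma birk_gh (hYs : ∀ y ∈ Y, shift y ∈ Y)
    (hsplit : ∀ y ∈ Y, ∀ k m, y k = 0 →
      L (k + m + 1) y + L 1 (shift^[k] y) = L (k + 1) y + L (m + 1) (shift^[k] y))
    (n : ℕ) (y : ℕ → Fin 2) (hy : y ∈ Y) (N : ℕ) (hN : n ≤ N) (hyN : y N = 0) :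
    birk (gh L lam) n y = L (N + 1) y - L (N + 1 - n) (shift^[n] y) := by
  induction n generalizing y N with
  | zero => simp [birk]
  | succ n ih =>
    obtain ⟨M, rfl⟩ : ∃ M, N = M + 1 := ⟨N - 1, by omega⟩
    rw [birk_succ, gh_eq hYs hsplit y hy (M + 1) (by omega) hyN, 
      ih (shift y) (hYs y hy) M (by omega) hyN, Function.iterate_succ_apply,
      show M + 1 + 1 - (n + 1) = M + 1 - n by omega]
    ring

lemma eq_one_of_ne (y : ℕ → Fin 2) (h : ∀ i, y i ≠ 0) : y = fun _ => 1 := by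
  funext i
  have := h i
  generalize y i = a at *
  revert a
  decide

lemma shift_one : shift (fun _ : ℕ => (1 : Fin 2)) = fun _ => 1 := rfl

lemma birk_one (n : ℕ) : birk (gh L lam) n (fun _ => 1) = n * lam := by
  have h1 : gh L lam (fun _ => 1) = lam := by
    simp [gh]
  induction n with
  | zero => simp [birk]
  | succ n ih =>
    rw [birk_succ, shift_one, ih, h1]
    push_cast
    ring

lemma gh_main (hYs : ∀ y ∈ Y, shift y ∈ Y)
    (hsplit : ∀ y ∈ Y, ∀ k m, y k = 0 →
      L (k + m + 1) y + L 1 (shift^[k] y) = L (k + 1) y + L (m + 1) (shift^[k] y))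
    (C D : ℕ → ℝ) (hC : ∀ n, 1 ≤ n → 0 < C n) (hD : ∀ n m, 1 ≤ m → m ≤ n → C m ≤ D n) (B : ℝ)
    (hAA : ∀ y ∈ Y, ∀ n m, 1 ≤ n → 1 ≤ m → |L (n + m) y - L n y - L m (shift^[n] y)| ≤ C n)
    (hL1 : ∀ y ∈ Y, |L 1 y| ≤ B)
    (hlam : (fun _ => 1) ∈ Y → ∀ n : ℕ, 1 ≤ n → |L n (fun _ => 1) - n * lam| ≤ C n)
    (y : ℕ → Fin 2) (hy : y ∈ Y) (n : ℕ) (hn : 1 ≤ n) :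
    |birk (gh L lam) n y - L n y| ≤ B + C 1 + D n := by
  have hB0 : 0 ≤ B := (abs_nonneg _).trans (hL1 y hy)
  have hC1 := hC 1 le_rfl
  have hDn : 0 < D n := (hC n hn).trans_le (hD n n hn le_rfl)
  by_cases hz : ∃ N, n ≤ N ∧ y N = 0
  · obtain ⟨N, hN, hyN⟩ := hz
    rw [birk_gh hYs hsplit n y hy N hN hyN]
    have h1 := hAA y hy n (N + 1 - n) hn (by omega)
    rw [show n + (N + 1 - n) = N + 1 by omega] at h1
    have h2 := hD n n hn le_rfl
    rw [show L (N + 1) y - L (N + 1 - n) (shift^[n] y) - L n y = 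
      L (N + 1) y - L n y - L (N + 1 - n) (shift^[n] y) by ring]
    linarith
  · push Not at hz
    have hq : ∃ q, ∀ i, q ≤ i → y i ≠ 0 := ⟨n, hz⟩
    have hqs := Nat.find_spec hq
    have hqn : Nat.find hq ≤ n := Nat.find_min' hq hz
    have hqm := fun m => Nat.find_min hq (m := m)
    generalize Nat.find hq = q at *
    cases q with
    | zero =>
      have := eq_one_of_ne y (fun i => hqs i (by omega))
      subst this
      rw [birk_one, abs_sub_comm]
      have := hlam hy n hn
      have := hD n n hn le_rfl
      linarith
    | succ j =>
      have hyj : y j = 0 := by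
        have := hqm j (by omega)
        push Not at this
        obtain ⟨i, hi, hi0⟩ := this
        rcases hi.eq_or_lt with h | h
        · rw [h]; exact hi0
        · exact absurd hi0 (hqs i h)
      obtain ⟨m, rfl⟩ : ∃ m, n = j + m + 1 := ⟨n - j - 1, by omega⟩
      have hz1 : shift (shift^[j] y) = fun _ => 1 := by
        refine eq_one_of_ne _ fun i => ?_
        rw [shift, shift_iter]
        exact hqs _ (by omega)
      have hjY := iter_mem hYs y hy j
      have hg0 : gh L lam (shift^[j] y) = 0 := by
        rw [gh, dif_neg, if_pos]
        · rw [shift_iter]; exact hyj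
        · rintro ⟨k, hk1, hk⟩
          rw [shift_iter] at hk
          exact hqs _ (by omega) hk
      have e1 : birk (gh L lam) (j + m + 1) y = L (j + 1) y - L 1 (shift^[j] y) + m * lam := by
        rw [show j + m + 1 = j + (m + 1) by ring, birk_add, birk_succ, hz1, birk_one, hg0,
          birk_gh hYs hsplit j y hy j le_rfl hyj, show j + 1 - j = 1 by omega]
        ring
      have e2 := hsplit y hy j m hyj
      rw [e1]
      have e3 : L (j + 1) y - L 1 (shift^[j] y) + m * lam - L (j + m + 1) y =
        m * lam - L (m + 1) (shift^[j] y) := by linarith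
      rw [e3]
      have hb := abs_le.1 (hL1 _ hjY)
      rcases Nat.eq_zero_or_pos m with h0 | h0
      · subst h0
        rw [abs_le]
        constructor <;> simp <;> linarith
      · have a1 := abs_le.1 (hAA _ hjY 1 m le_rfl h0)
        rw [Function.iterate_one, hz1, add_comm 1 m] at a1
        have h1Y : (fun _ => 1) ∈ Y := by rw [← hz1]; exact hYs _ hjY
        have a2 := abs_le.1 (hlam h1Y m h0)
        have a3 := hD (j + m + 1) m h0 (by omega)
        rw [abs_le]
        constructor <;> linarith

lemma gh_bdd (hYs : ∀ y ∈ Y, shift y ∈ Y)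
    (C : ℕ → ℝ) (hC : ∀ n, 1 ≤ n → 0 < C n) (B : ℝ)
    (hAA : ∀ y ∈ Y, ∀ n m, 1 ≤ n → 1 ≤ m → |L (n + m) y - L n y - L m (shift^[n] y)| ≤ C n)
    (hL1 : ∀ y ∈ Y, |L 1 y| ≤ B) (y : ℕ → Fin 2) (hy : y ∈ Y) :
    |gh L lam y| ≤ B + C 1 + |lam| := by
  have hB0 : 0 ≤ B := (abs_nonneg _).trans (hL1 y hy)
  have hC1 := hC 1 le_rfl
  have hl := abs_nonneg lam
  unfold gh
  split_ifs with h h1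
  · have h1 := (Nat.find_spec h).1
    generalize Nat.find h = k at *
    have a1 := abs_le.1 (hAA y hy 1 k le_rfl h1)
    rw [Function.iterate_one, add_comm 1 k] at a1
    have hb := abs_le.1 (hL1 _ hy)
    rw [abs_le]
    constructor <;> linarith
  · simp; linarith
  · linarith

lemma gh_meas (hL : ∀ n, Measurable (L n)) : Measurable (gh L lam) := by
  have hm0 : ∀ k : ℕ, MeasurableSet {y : ℕ → Fin 2 | y k = 0} := fun k => by
    have hm : Measurable (fun y : ℕ → Fin 2 => y k) := measurable_pi_apply k
    exact hm (measurableSet_singleton (0 : Fin 2))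
  set Q : Set (ℕ → Fin 2) := {y | ∃ k, 1 ≤ k ∧ y k = 0} with hQ
  have hQm : MeasurableSet Q := by
    have : Q = ⋃ k : ℕ, {y : ℕ → Fin 2 | 1 ≤ k ∧ y k = 0} := by ext; simp [hQ]
    rw [this]
    refine MeasurableSet.iUnion fun k => ?_
    exact (MeasurableSet.const _).inter (hm0 k)
  have hp : ∀ y : ℕ → Fin 2, ∃ k, (1 ≤ k ∧ y k = 0) ∨ y ∉ Q := by
    intro y
    by_cases h : y ∈ Q
    · obtain ⟨k, hk⟩ := h
      exact ⟨k, Or.inl hk⟩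
    · exact ⟨0, Or.inr h⟩
  have e : gh L lam = fun y => (fun (k : ℕ) (y : ℕ → Fin 2) => if y ∈ Q then 
      L (k + 1) y - L k (shift y) else if y 0 = 0 then 0 else lam) (Nat.find (hp y)) y := by
    funext y
    by_cases h : y ∈ Q
    · have h' : ∃ k, 1 ≤ k ∧ y k = 0 := h
      simp only [gh, dif_pos h', if_pos h]
      have : Nat.find h' = Nat.find (hp y) := by
        refine Nat.find_congr' (fun {k} => ?_)
        simp [h]
      rw [this]
    · have h' : ¬ ∃ k, 1 ≤ k ∧ y k = 0 := h
      simp only [gh, dif_neg h', if_neg h]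
  rw [e]
  refine Measurable.find (f := fun (k : ℕ) (y : ℕ → Fin 2) => if y ∈ Q then
      L (k + 1) y - L k (shift y) else if y 0 = 0 then 0 else lam)
      (p := fun (k : ℕ) (y : ℕ → Fin 2) => (1 ≤ k ∧ y k = 0) ∨ y ∉ Q) (fun k => ?_) (fun k => ?_) hp
  · refine Measurable.ite hQm ?_ ?_
    · exact (hL _).sub ((hL _).comp measurable_shift)
    · exact Measurable.ite (hm0 0) measurable_const measurable_const
  · exact ((MeasurableSet.const _).inter (hm0 k)).union hQm.compl

end GH

lemma ratio_iff {a s t c : ℝ} (hc : 0 < c) :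
    (c⁻¹ ≤ a / (Real.exp s * Real.exp t) ∧ a / (Real.exp s * Real.exp t) ≤ c) ↔
    (Real.exp (s + t) ≤ c * a ∧ a ≤ c * Real.exp (s + t)) := by
  rw [← Real.exp_add, div_le_iff₀ (Real.exp_pos _), le_div_iff₀ (Real.exp_pos _),
    inv_mul_le_iff₀ hc]

lemma gibbs_to_weak {k : ℕ} {Y : Set (ℕ → Fin k)} {g : (ℕ → Fin k) → ℝ} {m : Measure (ℕ → Fin k)}
    (h : GibbsFun Y g m) : WeakGibbsFun Y g m := by
  obtain ⟨P, C, hC, h⟩ := h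
  refine ⟨P, fun _ => C, fun _ _ => hC, ?_, h⟩
  exact tendsto_const_div_atTop_nhds_zero_nat _

/-- unpacked weak Gibbs inequalities -/
def WG {k : ℕ} (Y : Set (ℕ → Fin k)) (g : (ℕ → Fin k) → ℝ) (m : Measure (ℕ → Fin k)) (P : ℝ)
    (C : ℕ → ℝ) : Prop :=
  ∀ x ∈ Y, ∀ n : ℕ, 1 ≤ n → Real.exp (-(n : ℝ) * P + birk g n x) ≤ C n * pr m n (rs n x) ∧
    pr m n (rs n x) ≤ C n * Real.exp (-(n : ℝ) * P + birk g n x)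

lemma wg_step {k : ℕ} {Y : Set (ℕ → Fin k)} (hYm : MeasurableSet Y) {g : (ℕ → Fin k) → ℝ}
    {m m' : Measure (ℕ → Fin k)} (hm' : IsInvariantOn m' Y)
    {P P' : ℝ} {C C' : ℕ → ℝ} (hC : ∀ n, 1 ≤ n → 0 < C n) (hC' : ∀ n, 1 ≤ n → 0 < C' n)
    (h : WG Y g m P C) (h' : WG Y g m' P' C') (n : ℕ) (hn : 1 ≤ n) (w : Fin n → Fin k) :
    pr m' n w ≤ Real.exp (Real.log (C n) + Real.log (C' n) + n * (P - P')) * pr m n w := by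
  by_cases hw : 0 < pr m' n w
  · obtain ⟨y, hy, rfl⟩ := exists_of_pr_pos hYm hm' hw
    have h1 := (h y hy n hn).1
    have h2 := (h' y hy n hn).2
    rw [Real.exp_add, Real.exp_add, Real.exp_log (hC n hn), Real.exp_log (hC' n hn)]
    have e : Real.exp (-(n : ℝ) * P' + birk g n y) =
        Real.exp (n * (P - P')) * Real.exp (-(n : ℝ) * P + birk g n y) := by
      rw [← Real.exp_add]; congr 1; ring
    calc pr m' n (rs n y) ≤ C' n * Real.exp (-(n : ℝ) * P' + birk g n y) := h2
      _ = C' n * Real.exp (n * (P - P')) * Real.exp (-(n : ℝ) * P + birk g n y) := by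
        rw [e]; ring
      _ ≤ C' n * Real.exp (n * (P - P')) * (C n * pr m n (rs n y)) := by
        have := (hC' n hn).le
        gcongr
      _ = _ := by ring
  · exact (not_lt.1 hw).trans (mul_nonneg (Real.exp_pos _).le (pr_nonneg m n w))

lemma wg_le {k : ℕ} {Y : Set (ℕ → Fin k)} (hYm : MeasurableSet Y) {g : (ℕ → Fin k) → ℝ}
    {m m' : Measure (ℕ → Fin k)} (hm : IsInvariantOn m Y) (hm' : IsInvariantOn m' Y)
    {P P' : ℝ} {C C' : ℕ → ℝ} (hC : ∀ n, 1 ≤ n → 0 < C n) (hC' : ∀ n, 1 ≤ n → 0 < C' n)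
    (hT : Tendsto (fun n : ℕ => Real.log (C n) / n) atTop (𝓝 0))
    (hT' : Tendsto (fun n : ℕ => Real.log (C' n) / n) atTop (𝓝 0))
    (h : WG Y g m P C) (h' : WG Y g m' P' C') : P' ≤ P := by
  have := hm.1
  have := hm'.1
  have key : ∀ n : ℕ, 1 ≤ n → 0 ≤ Real.log (C n) / n + Real.log (C' n) / n + (P - P') := by
    intro n hn
    have hs : ∑ w, pr m' n w ≤ ∑ w, Real.exp (Real.log (C n) + Real.log (C' n) + n * (P - P')) * pr m n w :=
      Finset.sum_le_sum fun w _ => wg_step hYm hm' hC hC' h h' n hn w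
    rw [← Finset.mul_sum, sum_pr_univ, sum_pr_univ, mul_one, Real.one_le_exp_iff] at hs
    have hn' : (0 : ℝ) < n := by exact_mod_cast hn
    have := div_nonneg hs hn'.le
    have e : (Real.log (C n) + Real.log (C' n) + n * (P - P')) / n =
      Real.log (C n) / n + Real.log (C' n) / n + (P - P') := by field_simp
    rwa [e] at this
  have hl := (hT.add hT').add_const (P - P')
  have := ge_of_tendsto hl (eventually_atTop.2 ⟨1, key⟩)
  linarith

lemma wg_of {k : ℕ} {Y : Set (ℕ → Fin k)} (hYm : MeasurableSet Y) {g : (ℕ → Fin k) → ℝ}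
    {m : Measure (ℕ → Fin k)} (hm : IsInvariantOn m Y) {P : ℝ} {C : ℕ → ℝ}
    (hC : ∀ n, 1 ≤ n → 0 < C n) :
    WG Y g m P C ↔ ∀ x ∈ Y, ∀ n : ℕ, 1 ≤ n →
      (C n)⁻¹ ≤ (m (cyl Y x n)).toReal / (Real.exp (-(n : ℝ) * P) * Real.exp (birk g n x)) ∧
      (m (cyl Y x n)).toReal / (Real.exp (-(n : ℝ) * P) * Real.exp (birk g n x)) ≤ C n := by
  unfold WG
  refine forall_congr' fun x => forall_congr' fun hx => forall_congr' fun n => forall_congr' fun hn => ?_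
  rw [ratio_iff (hC n hn), cyl_pr m Y hYm hm]

lemma gibbs_unique {k : ℕ} {Y : Set (ℕ → Fin k)} (hYm : MeasurableSet Y) {g : (ℕ → Fin k) → ℝ}
    {m m' : Measure (ℕ → Fin k)} (hm : IsInvariantOn m Y) (hm' : IsInvariantOn m' Y)
    (herg : Ergodic shift m) (K : ℝ) (hK : 0 < K)
    (hsub : ∀ n l, 1 ≤ n → 1 ≤ l → ∀ (a : Fin n → Fin k) (b : Fin l → Fin k),
      pr m (n + l) (Fin.append a b) ≤ K * (pr m n a * pr m l b))
    (h : WeakGibbsFun Y g m) (h' : WeakGibbsFun Y g m') : m' = m := by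
  have := hm.1
  have := hm'.1
  obtain ⟨P, C, hC, hT, h⟩ := h
  obtain ⟨P', C', hC', hT', h'⟩ := h'
  have h := (wg_of hYm hm hC).2 h
  have h' := (wg_of hYm hm' hC').2 h'
  have e : P' = P := le_antisymm (wg_le hYm hm hm' hC hC' hT hT' h h')
    (wg_le hYm hm' hm hC' hC hT' hT h' h)
  subst e
  have hac : m' ≪ m := by
    refine ac_of_weak m' m (inv_mp hm') K hK hsub (fun n => Real.log (C n) + Real.log (C' n)) ?_ ?_
    · have := hT.add hT'
      simpa [add_div] using this
    · intro n hn w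
      have := wg_step hYm hm' hC hC' h h' n hn w
      simpa using this
  exact herg.eq_of_absolutelyContinuous (inv_mp hm') hac

section SFT

variable {A : Fin 3 → Fin 3 → ℕ} {X : Set (ℕ → Fin 3)} {F : Fin 3 → Fin 3 → ℝ}
  {f : (ℕ → Fin 3) → ℝ}

/-- the factor map on sequences -/
def pimap : (ℕ → Fin 3) → ℕ → Fin 2 := fun x => (projC (l := 3)) ∘ x

lemma measurable_pimap : Measurable pimap := by
  refine measurable_pi_lambda _ fun i => ?_
  exact (measurable_of_finite (projC (l := 3))).comp (measurable_pi_apply i)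

lemma pr_map (μ : Measure (ℕ → Fin 3)) [IsProbabilityMeasure μ] (n : ℕ) (y : ℕ → Fin 2) :
    pr (μ.map pimap) n (rs n y) =
      ∑ u : Fin n → Fin 3, if (∀ i : Fin n, projC (u i) = y i) then pr μ n u else 0 := by
  rw [← Finset.sum_filter, sum_pr]
  unfold pr
  rw [Measure.map_apply measurable_pimap (measurableSet_rs n _)]
  congr 2
  ext x
  simp only [Set.mem_preimage, Set.mem_singleton_iff, rs_eq_iff, Finset.coe_filter,
    Finset.mem_univ, true_and, Set.mem_ofPred_eq]
  constructor
  · intro h i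
    exact h i i.2
  · intro h i hi
    exact h ⟨i, hi⟩

lemma nu_g (hXdef : X = {x | ∀ n : ℕ, A (x n) (x (n + 1)) = 1})
    (hf : ∀ x : ℕ → Fin 3, f x = F (x 0) (x 1))
    (μ : Measure (ℕ → Fin 3)) (hμ : IsInvariantOn μ X) (P C : ℝ) (hC : 0 < C)
    (hG1 : ∀ x ∈ X, ∀ n : ℕ, 1 ≤ n → Real.exp (-(n : ℝ) * P + birk f n x) ≤ C * pr μ n (rs n x))
    (hG2 : ∀ x ∈ X, ∀ n : ℕ, 1 ≤ n → pr μ n (rs n x) ≤ C * Real.exp (-(n : ℝ) * P + birk f n x))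
    (n : ℕ) (hn : 1 ≤ n) (y : ℕ → Fin 2) :
    Real.exp (-(n : ℝ) * P) * gseq X projC f n y ≤ C * pr (μ.map pimap) n (rs n y) ∧
    pr (μ.map pimap) n (rs n y) ≤ C * (Real.exp (-(n : ℝ) * P) * gseq X projC f n y) := by
  have := hμ.1
  rw [pr_map, gseq_eq]
  have hXm := measurableSet_X hXdef
  have t1 : ∀ u : Fin n → Fin 3, Real.exp (-(n : ℝ) * P) * Tn X f n u ≤ C * pr μ n u := by
    intro u
    rw [← le_div_iff₀' (Real.exp_pos _)]
    refine Real.iSup_le (fun x => ?_) (div_nonneg (mul_nonneg hC.le (pr_nonneg _ _ _)) (Real.exp_pos _).le)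
    rw [le_div_iff₀' (Real.exp_pos _), ← Real.exp_add]
    have e : rs n x.1 = u := by
      funext i
      exact x.2.2 i
    have := hG1 x.1 x.2.1 n hn
    rwa [e] at this
  have t2 : ∀ u : Fin n → Fin 3, pr μ n u ≤ C * (Real.exp (-(n : ℝ) * P) * Tn X f n u) := by
    intro u
    by_cases hu : 0 < pr μ n u
    · obtain ⟨x, hx, rfl⟩ := exists_of_pr_pos hXm hμ hu
      refine (hG2 x hx n hn).trans ?_
      rw [Real.exp_add]
      have := le_Tn hf n (rs n x) x hx (fun i => rfl)
      gcongr
    · exact (not_lt.1 hu).trans (mul_nonneg hC.le (mul_nonneg (Real.exp_pos _).le (Tn_nonneg _ _ _ _)))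
  rw [Finset.mul_sum, Finset.mul_sum, Finset.mul_sum]
  constructor
  · refine Finset.sum_le_sum fun u _ => ?_
    split_ifs
    · exact t1 u
    · simp
  · refine Finset.sum_le_sum fun u _ => ?_
    split_ifs
    · exact t2 u
    · simp

lemma gseq_pos (hf : ∀ x : ℕ → Fin 3, f x = F (x 0) (x 1)) (x : ℕ → Fin 3) (hx : x ∈ X) (n : ℕ) :
    0 < gseq X projC f n (pimap x) := by
  rw [gseq_eq]
  have h1 : 0 < (if (∀ i : Fin n, projC (rs n x i) = pimap x i) then Tn X f n (rs n x) else 0) := by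
    have hp : ∀ i : Fin n, projC (rs n x i) = pimap x i := fun i => rfl
    rw [if_pos hp]
    exact (Real.exp_pos _).trans_le (le_Tn hf n (rs n x) x hx (fun i => rfl))
  refine h1.trans_le ?_
  refine Finset.single_le_sum (f := fun u : Fin n → Fin 3 => 
    if (∀ i : Fin n, projC (u i) = pimap x i) then Tn X f n u else 0) (fun u _ => ?_) (Finset.mem_univ (rs n x))
  split_ifs
  · exact Tn_nonneg _ _ _ _
  · exact le_rfl

lemma gseq_congr (n : ℕ) (y z : ℕ → Fin 2) (h : rs n y = rs n z) :
    gseq X projC f n y = gseq X projC f n z := by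
  rw [gseq_eq, gseq_eq]
  refine Finset.sum_congr rfl fun u _ => ?_
  have e : ∀ i : Fin n, y i = z i := fun i => congrFun h i
  simp only [e]

lemma gseq_meas (n : ℕ) : Measurable (gseq X projC f n : (ℕ → Fin 2) → ℝ) := by
  have e : (gseq X projC f n : (ℕ → Fin 2) → ℝ) =
      fun y => ∑ u : Fin n → Fin 3, if (∀ i : Fin n, projC (u i) = y i) then Tn X f n u else 0 := by
    funext y; exact gseq_eq _ _ _ _ _
  rw [e]
  refine Finset.measurable_sum _ fun u _ => ?_
  refine Measurable.ite ?_ measurable_const measurable_const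
  have : {y : ℕ → Fin 2 | ∀ i : Fin n, projC (u i) = y i} = rs n ⁻¹' {fun i => projC (u i)} := by
    ext y
    simp only [Set.mem_ofPred_eq, Set.mem_preimage, Set.mem_singleton_iff]
    constructor
    · intro h; funext i; exact (h i).symm
    · intro h i; exact (congrFun h i).symm
  rw [this]
  exact measurableSet_rs n _

lemma pimap_shift (x : ℕ → Fin 3) : pimap (shift x) = shift (pimap x) := rfl

lemma measurableSet_Y {Y : Set (ℕ → Fin 2)}
    (hYdef : Y = Set.univ ∨ Y = {y | ∀ n : ℕ, ¬(y n = 0 ∧ y (n + 1) = 0)}) : MeasurableSet Y := by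
  rcases hYdef with rfl | rfl
  · exact MeasurableSet.univ
  · have e : {y : ℕ → Fin 2 | ∀ n : ℕ, ¬(y n = 0 ∧ y (n + 1) = 0)} =
      ⋂ n : ℕ, (fun y : ℕ → Fin 2 => (y n, y (n + 1))) ⁻¹' {p | ¬(p.1 = 0 ∧ p.2 = 0)} := by
      ext x; simp
    rw [e]
    refine MeasurableSet.iInter fun n => ?_
    have hm : Measurable (fun y : ℕ → Fin 2 => (y n, y (n + 1))) :=
      (measurable_pi_apply n).prodMk (measurable_pi_apply (n + 1))
    exact hm (Set.toFinite _).measurableSet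

lemma nu_inv (μ : Measure (ℕ → Fin 3)) (hμ : IsInvariantOn μ X) {Y : Set (ℕ → Fin 2)}
    (hYm : MeasurableSet Y) (hs : ∀ x ∈ X, pimap x ∈ Y) : IsInvariantOn (μ.map pimap) Y := by
  have := hμ.1
  refine ⟨Measure.isProbabilityMeasure_map measurable_pimap.aemeasurable, ?_, ?_⟩
  · rw [Measure.map_apply measurable_pimap hYm]
    refine le_antisymm prob_le_one ?_
    rw [← hμ.2.1]
    exact measure_mono hs
  · intro B hB
    rw [Measure.map_apply measurable_pimap (measurable_shift hB), Measure.map_apply measurable_pimap hB,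
      ← hμ.2.2 _ (measurable_pimap hB)]
    rfl

lemma nu_erg (μ : Measure (ℕ → Fin 3)) (hμ : Ergodic shift μ) : Ergodic shift (μ.map pimap) :=
  MeasurePreserving.ergodic_of_ergodic_semiconj (measurable_pimap.measurePreserving μ) hμ
    measurable_shift pimap_shift

lemma nu_sub (hXdef : X = {x | ∀ n : ℕ, A (x n) (x (n + 1)) = 1})
    (hf : ∀ x : ℕ → Fin 3, f x = F (x 0) (x 1)) (ν : Measure (ℕ → Fin 2)) (P C : ℝ) (hC : 0 < C)
    (hg : ∀ n : ℕ, 1 ≤ n → ∀ y : ℕ → Fin 2,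
      Real.exp (-(n : ℝ) * P) * gseq X projC f n y ≤ C * pr ν n (rs n y) ∧
      pr ν n (rs n y) ≤ C * (Real.exp (-(n : ℝ) * P) * gseq X projC f n y))
    (n l : ℕ) (hn : 1 ≤ n) (hl : 1 ≤ l) (a : Fin n → Fin 2) (b : Fin l → Fin 2) :
    pr ν (n + l) (Fin.append a b) ≤ C ^ 3 * (pr ν n a * pr ν l b) := by
  set y : ℕ → Fin 2 := fun i => if h : i < n + l then Fin.append a b ⟨i, h⟩ else 0 with hy
  have e1 : rs (n + l) y = Fin.append a b := by
    funext i
    simp [rs, hy, i.2]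
  have e2 : rs n y = a := by
    funext i
    have : (i : ℕ) < n + l := by omega
    simp only [rs, hy, this, dif_pos]
    exact Fin.append_left a b i
  have e3 : rs l (shift^[n] y) = b := by
    funext i
    have : n + (i : ℕ) < n + l := by omega
    simp only [rs, shift_iter, hy, this, dif_pos]
    exact Fin.append_right a b i
  have h1 := (hg (n + l) (by omega) y).2
  have h2 := (hg n hn y).1
  have h3 := (hg l hl (shift^[n] y)).1
  rw [e1] at h1
  rw [e2] at h2
  rw [e3] at h3
  have h4 := gseq_submul hXdef hf n l y
  refine h1.trans ?_
  have ee : Real.exp (-((n + l : ℕ) : ℝ) * P) = Real.exp (-(n : ℝ) * P) * Real.exp (-(l : ℝ) * P) := by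
    rw [← Real.exp_add]; push_cast; congr 1; ring
  calc C * (Real.exp (-((n + l : ℕ) : ℝ) * P) * gseq X projC f (n + l) y)
      ≤ C * (Real.exp (-((n + l : ℕ) : ℝ) * P) * (gseq X projC f n y * gseq X projC f l (shift^[n] y))) := by
        gcongr
    _ = C * ((Real.exp (-(n : ℝ) * P) * gseq X projC f n y) *
        (Real.exp (-(l : ℝ) * P) * gseq X projC f l (shift^[n] y))) := by rw [ee]; ring
    _ ≤ C * ((C * pr ν n a) * (C * pr ν l b)) := by
        have g1 := gseq_nonneg X projC f l (shift^[n] y)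
        have g2 := pr_nonneg ν n a
        gcongr
    _ = _ := by ring

end SFT

lemma sup_tendsto (C : ℕ → ℝ) (hC : ∀ n, 1 ≤ n → 0 < C n)
    (hT : Tendsto (fun n : ℕ => C n / n) atTop (𝓝 0)) :
    ∃ D : ℕ → ℝ, (∀ n m, 1 ≤ m → m ≤ n → C m ≤ D n) ∧
      Tendsto (fun n : ℕ => D n / n) atTop (𝓝 0) := by
  have hne : ∀ n : ℕ, (Finset.range (n + 1)).Nonempty := fun n => ⟨0, by simp⟩
  set D : ℕ → ℝ := fun n => (Finset.range (n + 1)).sup' (hne n) C with hD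
  have h1 : ∀ n m, m ≤ n → C m ≤ D n := by
    intro n m hm
    exact Finset.le_sup' C (by simp; omega)
  refine ⟨D, fun n m _ h => h1 n m h, ?_⟩
  rw [Metric.tendsto_atTop] at hT ⊢
  intro ε hε
  obtain ⟨N, hN⟩ := hT (ε / 2) (by positivity)
  obtain ⟨M, hM⟩ := exists_nat_gt (2 * |D N| / ε)
  refine ⟨M + N + 1, fun n hn => ?_⟩
  have hn0 : (0 : ℝ) < n := by exact_mod_cast (by omega : 0 < n)
  have hpos : 0 < D n := (hC 1 le_rfl).trans_le (h1 n 1 (by omega))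
  rw [Real.dist_eq, sub_zero, abs_of_nonneg (div_nonneg hpos.le hn0.le), div_lt_iff₀ hn0]
  have hMn : (M : ℝ) ≤ n := by exact_mod_cast (by omega : M ≤ n)
  have h2 : 2 * |D N| < ε * n := by
    rw [div_lt_iff₀ hε] at hM
    nlinarith
  rw [hD]
  simp only
  rw [Finset.sup'_lt_iff]
  intro m hm
  have hm' : m ≤ n := by simp at hm; omega
  rcases Nat.lt_or_ge m (N + 1) with h | h
  · have := h1 N m (by omega)
    have := le_abs_self (D N)
    nlinarith [abs_nonneg (D N), mul_pos hε hn0]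
  · have h3 := hN m (by omega)
    have hm0 : (0 : ℝ) < m := by exact_mod_cast (by omega : 0 < m)
    have hmn : (m : ℝ) ≤ n := by exact_mod_cast hm'
    rw [Real.dist_eq, sub_zero] at h3
    have h4 := (le_abs_self _).trans_lt h3
    rw [div_lt_iff₀ hm0] at h4
    nlinarith [mul_pos hε hn0]

section SFT

variable {A : Fin 3 → Fin 3 → ℕ} {X : Set (ℕ → Fin 3)} {F : Fin 3 → Fin 3 → ℝ}
  {f : (ℕ → Fin 3) → ℝ} {Y : Set (ℕ → Fin 2)}

lemma exists_gh (hA01 : ∀ i j, A i j = 0 ∨ A i j = 1)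
    (hXdef : X = {x | ∀ n : ℕ, A (x n) (x (n + 1)) = 1})
    (hf : ∀ x : ℕ → Fin 3, f x = F (x 0) (x 1)) (hYs : ∀ y ∈ Y, shift y ∈ Y)
    (hpos : ∀ y ∈ Y, ∀ n, 0 < gseq X projC f n y)
    (C D : ℕ → ℝ) (hC : ∀ n, 1 ≤ n → 0 < C n) (hD : ∀ n m, 1 ≤ m → m ≤ n → C m ≤ D n)
    (hAA : ∀ x ∈ Y, ∀ n m : ℕ, 1 ≤ n → 1 ≤ m →
      Real.exp (-(C n)) * (gseq X projC f n x * gseq X projC f m (shift^[n] x)) ≤ gseq X projC f (n + m) x ∧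
      gseq X projC f (n + m) x ≤ Real.exp (C n) * (gseq X projC f n x * gseq X projC f m (shift^[n] x))) :
    ∃ gg : (ℕ → Fin 2) → ℝ, Measurable gg ∧ (∃ B : ℝ, ∀ y ∈ Y, |gg y| ≤ B) ∧
      ∃ K : ℝ, ∀ y ∈ Y, ∀ n : ℕ, 1 ≤ n →
        |birk gg n y - Real.log (gseq X projC f n y)| ≤ K + D n := by
  set L : ℕ → (ℕ → Fin 2) → ℝ := fun n y => Real.log (gseq X projC f n y) with hL
  have hit : ∀ y ∈ Y, ∀ n, shift^[n] y ∈ Y := fun y hy n => iter_mem hYs y hy n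
  have hAA' : ∀ y ∈ Y, ∀ n m, 1 ≤ n → 1 ≤ m → |L (n + m) y - L n y - L m (shift^[n] y)| ≤ C n := by
    intro y hy n m hn hm
    obtain ⟨h1, h2⟩ := hAA y hy n m hn hm
    have p1 := hpos y hy n
    have p2 := hpos _ (hit y hy n) m
    have p3 := hpos y hy (n + m)
    have l1 := Real.log_le_log (by positivity) h1
    have l2 := Real.log_le_log p3 h2
    rw [Real.log_mul (Real.exp_pos _).ne' (by positivity), Real.log_mul p1.ne' p2.ne', Real.log_exp] at l1 l2
    simp only [hL]
    rw [abs_le]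
    constructor <;> linarith
  have hsplit : ∀ y ∈ Y, ∀ k m, y k = 0 →
      L (k + m + 1) y + L 1 (shift^[k] y) = L (k + 1) y + L (m + 1) (shift^[k] y) := by
    intro y hy k m h0
    have := congrArg Real.log (gseq_split hA01 hXdef hf k m y h0)
    rwa [Real.log_mul (hpos y hy _).ne' (hpos _ (hit y hy k) _).ne',
      Real.log_mul (hpos y hy _).ne' (hpos _ (hit y hy k) _).ne'] at this
  have hL1 : ∀ y ∈ Y, |L 1 y| ≤ ∑ a : Fin 2, |L 1 (fun _ => a)| := by
    intro y _
    have e : L 1 y = L 1 (fun _ => y 0) := by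
      simp only [hL]
      rw [gseq_congr 1 y (fun _ => y 0)]
      rw [rs_eq_iff]
      intro i hi
      have : i = 0 := by omega
      rw [this]
    rw [e]
    exact Finset.single_le_sum (f := fun a : Fin 2 => |L 1 (fun _ => a)|) (fun a _ => abs_nonneg _)
      (Finset.mem_univ (y 0))
  have hlam : ∃ lam : ℝ, (fun _ => (1 : Fin 2)) ∈ Y → ∀ n : ℕ, 1 ≤ n →
      |L n (fun _ => 1) - n * lam| ≤ C n := by
    by_cases h1 : (fun _ => (1 : Fin 2)) ∈ Y
    · have hi : ∀ n, shift^[n] (fun _ : ℕ => (1 : Fin 2)) = fun _ => 1 := by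
        intro n
        funext i
        rw [shift_iter]
      obtain ⟨lam, hlam⟩ := fekete_two (fun n => L n (fun _ => 1)) C hC (by
        intro n m _ _
        have := Real.log_le_log (hpos _ h1 _) (gseq_submul hXdef hf n m (fun _ => 1))
        rw [hi, Real.log_mul (hpos _ h1 _).ne' (hpos _ h1 _).ne'] at this
        exact this) (by
        intro n m hn hm
        have := hAA' _ h1 n m hn hm
        rw [hi, abs_le] at this
        linarith [this.1])
      exact ⟨lam, fun _ => hlam⟩
    · exact ⟨0, fun h => absurd h h1⟩
  obtain ⟨lam, hlam⟩ := hlam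
  refine ⟨gh L lam, gh_meas fun n => Real.measurable_log.comp (gseq_meas n), ⟨_, fun y hy =>
    gh_bdd hYs C hC _ hAA' hL1 y hy⟩, _, fun y hy n hn =>
    gh_main hYs hsplit C D hC hD _ hAA' hL1 hlam y hy n hn⟩

lemma wg_of_gh (hpos : ∀ y ∈ Y, ∀ n, 0 < gseq X projC f n y)
    (ν : Measure (ℕ → Fin 2)) (P C : ℝ) (hC : 0 < C)
    (hg : ∀ n : ℕ, 1 ≤ n → ∀ y : ℕ → Fin 2,
      Real.exp (-(n : ℝ) * P) * gseq X projC f n y ≤ C * pr ν n (rs n y) ∧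
      pr ν n (rs n y) ≤ C * (Real.exp (-(n : ℝ) * P) * gseq X projC f n y))
    (gg : (ℕ → Fin 2) → ℝ) (K : ℝ) (D : ℕ → ℝ)
    (h : ∀ y ∈ Y, ∀ n : ℕ, 1 ≤ n → |birk gg n y - Real.log (gseq X projC f n y)| ≤ K + D n) :
    WG Y gg ν P (fun n => C * Real.exp (K + D n)) := by
  intro y hy n hn
  have hp := hpos y hy n
  obtain ⟨h1, h2⟩ := hg n hn y
  have h3 := abs_le.1 (h y hy n hn)
  have e : Real.exp (-(n : ℝ) * P) * gseq X projC f n y =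
      Real.exp (-(n : ℝ) * P + Real.log (gseq X projC f n y)) := by
    rw [Real.exp_add, Real.exp_log hp]
  rw [e] at h1 h2
  constructor
  · calc Real.exp (-(n : ℝ) * P + birk gg n y)
        ≤ Real.exp ((K + D n) + (-(n : ℝ) * P + Real.log (gseq X projC f n y))) :=
          Real.exp_le_exp.2 (by linarith [h3.2])
      _ = Real.exp (K + D n) * Real.exp (-(n : ℝ) * P + Real.log (gseq X projC f n y)) :=
          Real.exp_add _ _
      _ ≤ Real.exp (K + D n) * (C * pr ν n (rs n y)) := by gcongr
      _ = _ := by ring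
  · calc pr ν n (rs n y) ≤ C * Real.exp (-(n : ℝ) * P + Real.log (gseq X projC f n y)) := h2
      _ ≤ C * Real.exp ((K + D n) + (-(n : ℝ) * P + birk gg n y)) := by
          refine mul_le_mul_of_nonneg_left (Real.exp_le_exp.2 ?_) hC.le
          linarith [h3.1]
      _ = _ := by rw [Real.exp_add (K + D n)]; ring

lemma aa_of_wg (hYs : ∀ y ∈ Y, shift y ∈ Y) (hpos : ∀ y ∈ Y, ∀ n, 0 < gseq X projC f n y)
    (ν : Measure (ℕ → Fin 2)) (P C : ℝ) (hC : 0 < C)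
    (hg : ∀ n : ℕ, 1 ≤ n → ∀ y : ℕ → Fin 2,
      Real.exp (-(n : ℝ) * P) * gseq X projC f n y ≤ C * pr ν n (rs n y) ∧
      pr ν n (rs n y) ≤ C * (Real.exp (-(n : ℝ) * P) * gseq X projC f n y))
    (gg : (ℕ → Fin 2) → ℝ) (Q C' : ℝ) (hC' : 0 < C') (h : WG Y gg ν Q (fun _ => C')) :
    ∃ K : ℝ, 0 < K ∧ AAOn Y (gseq X projC f) K := by
  set κ := Real.log (C * C') with hκ
  have hb : ∀ y ∈ Y, ∀ n : ℕ, 1 ≤ n → 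
      |(-(n : ℝ) * Q + birk gg n y) - (-(n : ℝ) * P + Real.log (gseq X projC f n y))| ≤ κ := by
    intro y hy n hn
    have hp := hpos y hy n
    obtain ⟨h1, h2⟩ := hg n hn y
    obtain ⟨h3, h4⟩ := h y hy n hn
    have e : Real.exp (-(n : ℝ) * P) * gseq X projC f n y =
        Real.exp (-(n : ℝ) * P + Real.log (gseq X projC f n y)) := by
      rw [Real.exp_add, Real.exp_log hp]
    rw [e] at h1 h2
    have ek : Real.exp κ = C * C' := Real.exp_log (by positivity)
    rw [abs_le]
    constructor
    · have : Real.exp (-(n : ℝ) * P + Real.log (gseq X projC f n y)) ≤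
          Real.exp (κ + (-(n : ℝ) * Q + birk gg n y)) := by
        rw [Real.exp_add κ, ek]
        calc _ ≤ _ := h1
          _ ≤ C * (C' * Real.exp (-(n : ℝ) * Q + birk gg n y)) := by gcongr
          _ = _ := by ring
      linarith [Real.exp_le_exp.1 this]
    · have : Real.exp (-(n : ℝ) * Q + birk gg n y) ≤
          Real.exp (κ + (-(n : ℝ) * P + Real.log (gseq X projC f n y))) := by
        rw [Real.exp_add κ, ek]
        calc _ ≤ _ := h3
          _ ≤ C' * (C * Real.exp (-(n : ℝ) * P + Real.log (gseq X projC f n y))) := by gcongr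
          _ = _ := by ring
      linarith [Real.exp_le_exp.1 this]
  refine ⟨3 * |κ| + 1, by positivity, ?_⟩
  intro y hy n m hn hm
  have b1 := abs_le.1 (hb y hy n hn)
  have b2 := abs_le.1 (hb _ (iter_mem hYs y hy n) m hm)
  have b3 := abs_le.1 (hb y hy (n + m) (by omega))
  rw [birk_add] at b3
  push_cast at b3
  have hk := le_abs_self κ
  have p1 := hpos y hy n
  have p2 := hpos _ (iter_mem hYs y hy n) m
  have p3 := hpos y hy (n + m)
  constructor
  · rw [← Real.log_le_log_iff (by positivity) p3, Real.log_mul (Real.exp_pos _).ne' (by positivity),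
      Real.log_mul p1.ne' p2.ne', Real.log_exp]
    linarith [b1.1, b1.2, b2.1, b2.2, b3.1, b3.2]
  · rw [← Real.log_le_log_iff p3 (by positivity), Real.log_mul (Real.exp_pos _).ne' (by positivity),
      Real.log_mul p1.ne' p2.ne', Real.log_exp]
    linarith [b1.1, b1.2, b2.1, b2.2, b3.1, b3.2]

end SFT

/-- Theorem `phd1` (i): under Setting (C), with `μ` an invariant Gibbs
measure for `f`, the sequence `𝓖 = {log g_n}` is almost additive on `Y` iff there is a
bounded Borel measurable `ĝ` on `Y` for which `πμ` is the unique invariant Gibbs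
measure; and if `𝓖` is weakly almost additive, there is a bounded Borel measurable `ĝ`
for which `πμ` is the unique invariant weak Gibbs measure. (Symbols `1,2,3` of the
paper are `0,1,2` here, and symbols `1,2` of `Y` are `0,1`.) -/
theorem stmt_18
    (A : Fin 3 → Fin 3 → ℕ) (hA01 : ∀ i j, A i j = 0 ∨ A i j = 1)
    (X : Set (ℕ → Fin 3)) (hXdef : X = {x | ∀ n : ℕ, A (x n) (x (n + 1)) = 1})
    (hXirr : IrreducibleShift X)
    (Y : Set (ℕ → Fin 2))
    (hYdef : Y = Set.univ ∨ Y = {y | ∀ n : ℕ, ¬(y n = 0 ∧ y (n + 1) = 0)})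
    (hYirr : IrreducibleShift Y)
    (hsurj : (fun x => (projC (l := 3)) ∘ x) '' X = Y)
    (F : Fin 3 → Fin 3 → ℝ) (f : (ℕ → Fin 3) → ℝ)
    (hf : ∀ x : ℕ → Fin 3, f x = F (x 0) (x 1))
    (μ : Measure (ℕ → Fin 3)) (hμinv : IsInvariantOn μ X) (hμG : GibbsFun X f μ) :
    ((∃ C : ℝ, 0 < C ∧ AAOn Y (gseq X projC f) C) ↔
      (∃ ghat : (ℕ → Fin 2) → ℝ,
        Measurable (fun y : Y => ghat ↑y) ∧ (∃ B : ℝ, ∀ y ∈ Y, |ghat y| ≤ B) ∧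
        IsInvariantOn (μ.map (fun x => (projC (l := 3)) ∘ x)) Y ∧
        GibbsFun Y ghat (μ.map (fun x => (projC (l := 3)) ∘ x)) ∧
        ∀ ν : Measure (ℕ → Fin 2), IsInvariantOn ν Y → GibbsFun Y ghat ν →
          ν = μ.map (fun x => (projC (l := 3)) ∘ x))) ∧
    (WeakAAOn Y (gseq X projC f) →
      ∃ ghat : (ℕ → Fin 2) → ℝ,
        Measurable (fun y : Y => ghat ↑y) ∧ (∃ B : ℝ, ∀ y ∈ Y, |ghat y| ≤ B) ∧
        IsInvariantOn (μ.map (fun x => (projC (l := 3)) ∘ x)) Y ∧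
        WeakGibbsFun Y ghat (μ.map (fun x => (projC (l := 3)) ∘ x)) ∧
        ∀ ν : Measure (ℕ → Fin 2), IsInvariantOn ν Y → WeakGibbsFun Y ghat ν →
          ν = μ.map (fun x => (projC (l := 3)) ∘ x)) := by
  have hXm := measurableSet_X hXdef
  have hYm := measurableSet_Y hYdef
  have hYm' : ∀ x ∈ X, pimap x ∈ Y := fun x hx => hsurj ▸ ⟨x, hx, rfl⟩
  have hYpre : ∀ y ∈ Y, ∃ x ∈ X, pimap x = y := by
    intro y hy
    rw [← hsurj] at hy
    exact hy
  have hYs : ∀ y ∈ Y, shift y ∈ Y := by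
    intro y hy
    obtain ⟨x, hx, rfl⟩ := hYpre y hy
    exact hYm' (shift x) (shift_mem hXdef hx)
  have hpos : ∀ y ∈ Y, ∀ n, 0 < gseq X projC f n y := by
    intro y hy n
    obtain ⟨x, hx, rfl⟩ := hYpre y hy
    exact gseq_pos hf x hx n
  obtain ⟨P, C, hC, hG⟩ := hμG
  have hWG : WG X f μ P (fun _ => C) := (wg_of hXm hμinv (C := fun _ => C) (fun _ _ => hC)).2 hG
  have hG1 : ∀ x ∈ X, ∀ n : ℕ, 1 ≤ n → Real.exp (-(n : ℝ) * P + birk f n x) ≤ C * pr μ n (rs n x) :=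
    fun x hx n hn => (hWG x hx n hn).1
  have hG2 : ∀ x ∈ X, ∀ n : ℕ, 1 ≤ n → pr μ n (rs n x) ≤ C * Real.exp (-(n : ℝ) * P + birk f n x) :=
    fun x hx n hn => (hWG x hx n hn).2
  have hprob := hμinv.1
  have hmp : (fun x => (projC (l := 3)) ∘ x) = pimap := rfl
  rw [hmp]
  have hνinv : IsInvariantOn (μ.map pimap) Y := nu_inv μ hμinv hYm hYm'
  have herg : Ergodic shift (μ.map pimap) := by
    obtain ⟨p, c, hc, h⟩ := gibbs_conn hXdef hXirr hf μ hμinv P C hC hG1 hG2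
    exact nu_erg μ (ergodic_of_conn μ (inv_mp hμinv) p c hc h)
  have hg := nu_g hXdef hf μ hμinv P C hC hG1 hG2
  have hsub := nu_sub hXdef hf (μ.map pimap) P C hC hg
  have huniq : ∀ g : (ℕ → Fin 2) → ℝ, WeakGibbsFun Y g (μ.map pimap) →
      ∀ ν : Measure (ℕ → Fin 2), IsInvariantOn ν Y → WeakGibbsFun Y g ν → ν = μ.map pimap :=
    fun g h ν hν hν' => gibbs_unique hYm hνinv hν herg (C ^ 3) (by positivity) hsub h hν'
  refine ⟨⟨?_, ?_⟩, ?_⟩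
  · rintro ⟨K, hK, hAA⟩
    obtain ⟨gg, hgm, hgb, K', h⟩ := exists_gh hA01 hXdef hf hYs hpos (fun _ => K) (fun _ => K)
      (fun _ _ => hK) (fun _ _ _ _ => le_rfl) hAA
    have hw := wg_of_gh hpos _ P C hC hg gg K' (fun _ => K) h
    have hcp : 0 < C * Real.exp (K' + K) := by positivity
    have hG' : GibbsFun Y gg (μ.map pimap) :=
      ⟨P, C * Real.exp (K' + K), hcp,
        (wg_of hYm hνinv (C := fun _ => C * Real.exp (K' + K)) (fun _ _ => hcp)).1 hw⟩
    exact ⟨gg, hgm.comp measurable_subtype_coe, hgb, hνinv, hG', fun ν hν hν' =>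
      huniq gg (gibbs_to_weak hG') ν hν (gibbs_to_weak hν')⟩
  · rintro ⟨gg, -, -, -, ⟨Q, C', hC', hG'⟩, -⟩
    exact aa_of_wg hYs hpos _ P C hC hg gg Q C' hC'
      ((wg_of hYm hνinv (C := fun _ => C') (fun _ _ => hC')).2 hG')
  · rintro ⟨K, hK, hT, hAA⟩
    obtain ⟨D, hD, hDT⟩ := sup_tendsto K hK hT
    obtain ⟨gg, hgm, hgb, K', h⟩ := exists_gh hA01 hXdef hf hYs hpos K D hK hD hAA
    have hw := wg_of_gh hpos _ P C hC hg gg K' D h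
    have hcp : ∀ n : ℕ, 1 ≤ n → 0 < C * Real.exp (K' + D n) := fun n _ => by positivity
    have hG' : WeakGibbsFun Y gg (μ.map pimap) := by
      refine ⟨P, fun n => C * Real.exp (K' + D n), hcp, ?_, (wg_of hYm hνinv hcp).1 hw⟩
      have e : (fun n : ℕ => Real.log (C * Real.exp (K' + D n)) / n) =
          fun n : ℕ => (Real.log C + K') / n + D n / n := by
        funext n
        rw [Real.log_mul hC.ne' (Real.exp_pos _).ne', Real.log_exp]
        ring
      rw [e]
      simpa using (tendsto_const_div_atTop_nhds_zero_nat (Real.log C + K')).add hDT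
    exact ⟨gg, hgm.comp measurable_subtype_coe, hgb, hνinv, hG', fun ν hν hν' =>
      huniq gg hG' ν hν hν'⟩
end
end

section
/- Let π : X → Y be a one-block factor map, where X is a topologically mixing one-sided shift of finite type and Y is a subshift, and let f be a continuous real-valued function on X that admits a unique invariant Gibbs measure μ on X. If π is fiber-wise sub-positive mixing, then the sequence 𝓖 = {log g_n} associated to the relative pressure function P(σ_X, π, f) is almost additive on Y. -/
open MeasureTheory Filter Topology

noncomputable section

open scoped Classical

/-- Fiber-wise sub-positive mixing for a one-block factor map (Definition
`subp`), with block length `k + 1 ≥ 1`. -/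
def FiberMixing {kX kY : ℕ} (X : Set (ℕ → Fin kX)) (Y : Set (ℕ → Fin kY))
    (πs : Fin kX → Fin kY) : Prop :=
  ∃ k : ℕ, ∀ w : Fin (k + 1) → Fin kY, (∃ y ∈ Y, ∀ i : Fin (k + 1), y ↑i = w i) →
    ∀ u v : Fin (k + 1) → Fin kX,
      (∃ x ∈ X, ∀ i : Fin (k + 1), x ↑i = u i) →
      (∃ x ∈ X, ∀ i : Fin (k + 1), x ↑i = v i) →
      (∀ i : Fin (k + 1), πs (u i) = w i) → (∀ i : Fin (k + 1), πs (v i) = w i) →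
      ∃ a : Fin (k + 1) → Fin kX, (∃ x ∈ X, ∀ i : Fin (k + 1), x ↑i = a i) ∧
        a 0 = u 0 ∧ a (Fin.last k) = v (Fin.last k) ∧
        ∀ i : Fin (k + 1), πs (a i) = w i

theorem aux_sum_inj {α β : Type*} [Fintype α] [Fintype β] (Ψ : α → β)
    (hΨ : Function.Injective Ψ) (F : α → ℝ) (G : β → ℝ) (hG : ∀ b, 0 ≤ G b)
    (h : ∀ a, F a ≤ G (Ψ a)) : ∑ a, F a ≤ ∑ b, G b := by
  calc ∑ a, F a ≤ ∑ a, G (Ψ a) := Finset.sum_le_sum fun a _ => h a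
    _ = ∑ b ∈ Finset.univ.map ⟨Ψ, hΨ⟩, G b := by simp
    _ ≤ ∑ b, G b := Finset.sum_le_sum_of_subset_of_nonneg (Finset.subset_univ _)
        fun b _ _ => hG b

theorem aux_shift_iter {A : Type*} (x : ℕ → A) (n i : ℕ) : (shift^[n] x) i = x (n + i) := by
  induction n generalizing i with
  | zero => simp
  | succ n ih =>
    rw [Function.iterate_succ_apply']
    simp only [shift, ih]
    congr 1
    omega

theorem aux_birk_add {A : Type*} (g : (ℕ → A) → ℝ) (a b : ℕ) (x : ℕ → A) :
    birk g (a + b) x = birk g a x + birk g b (shift^[a] x) := by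
  unfold birk
  rw [Finset.sum_range_add]
  congr 1
  refine Finset.sum_congr rfl fun i _ => ?_
  rw [← Function.iterate_add_apply, add_comm]

theorem aux_splice {kX : ℕ} (A : Fin kX → Fin kX → ℕ) (X : Set (ℕ → Fin kX))
    (hX : X = {x | ∀ n : ℕ, A (x n) (x (n + 1)) = 1}) (a b : ℕ → Fin kX) (ha : a ∈ X)
    (hb : b ∈ X) (j j' : ℕ) (h : a j = b j') :
    ∃ z ∈ X, (∀ i ≤ j, z i = a i) ∧ ∀ i, z (j + i) = b (j' + i) := by
  subst hX
  refine ⟨fun i => if i < j then a i else b (j' + (i - j)), ?_, ?_, ?_⟩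
  · intro i
    simp only
    rcases lt_trichotomy (i + 1) j with h1 | h1 | h1
    · rw [if_pos (by omega), if_pos h1]; exact ha i
    · subst h1
      rw [if_pos (by omega), if_neg (by omega)]
      simp only [Nat.sub_self, add_zero]
      rw [← h]; exact ha i
    · rw [if_neg (by omega), if_neg (by omega)]
      have : j' + (i + 1 - j) = j' + (i - j) + 1 := by omega
      rw [this]; exact hb _
  · intro i hi
    simp only
    split_ifs with h1
    · rfl
    · have : i = j := by omega
      subst this
      simp [h]
  · intro i
    simp

theorem aux_mem_shift {kX : ℕ} (A : Fin kX → Fin kX → ℕ) (X : Set (ℕ → Fin kX))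
    (hX : X = {x | ∀ n : ℕ, A (x n) (x (n + 1)) = 1}) (x : ℕ → Fin kX) (hx : x ∈ X) (n : ℕ) :
    shift^[n] x ∈ X := by
  subst hX
  intro i
  rw [aux_shift_iter, aux_shift_iter]
  exact hx (n + i)

def PMix {kX kY : ℕ} (X : Set (ℕ → Fin kX)) (πs : Fin kX → Fin kY) (k : ℕ) : Prop :=
  ∀ u ∈ X, ∀ v ∈ X, (∀ i ≤ k, πs (u i) = πs (v i)) →
    ∃ a ∈ X, a 0 = u 0 ∧ a k = v k ∧ ∀ i ≤ k, πs (a i) = πs (u i)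

theorem aux_pmix {kX kY : ℕ} (X : Set (ℕ → Fin kX)) (Y : Set (ℕ → Fin kY))
    (πs : Fin kX → Fin kY) (hsurj : (fun x => πs ∘ x) '' X = Y) (h : FiberMixing X Y πs) :
    ∃ k, PMix X πs k := by
  obtain ⟨k, hk⟩ := h
  refine ⟨k, fun u hu v hv huv => ?_⟩
  obtain ⟨a, ⟨z, hz, hza⟩, h0, h1, h2⟩ := hk (fun i => πs (u i))
    ⟨πs ∘ u, hsurj ▸ ⟨u, hu, rfl⟩, fun i => rfl⟩ (fun i => u i) (fun i => v i)
    ⟨u, hu, fun _ => rfl⟩ ⟨v, hv, fun _ => rfl⟩ (fun _ => rfl)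
    (fun i => (huv i (by omega)).symm)
  refine ⟨z, hz, ?_, ?_, ?_⟩
  · have := hza 0
    simp only [Fin.val_zero] at this
    rw [this, h0]; rfl
  · have := hza (Fin.last k)
    simp only [Fin.val_last] at this
    rw [this, h1]; rfl
  · intro i hi
    have := hza ⟨i, by omega⟩
    simp only at this
    rw [this, h2]

theorem aux_left {kX kY : ℕ} (A : Fin kX → Fin kX → ℕ) (X : Set (ℕ → Fin kX))
    (hX : X = {x | ∀ n : ℕ, A (x n) (x (n + 1)) = 1})
    (πs : Fin kX → Fin kY) (k : ℕ) (hk : PMix X πs k) (p x : ℕ → Fin kX) (hp : p ∈ X)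
    (hx : x ∈ X) (n : ℕ) (h : ∀ i < n, πs (p i) = πs (x i)) :
    ∃ q ∈ X, (∀ i < n - (k + 1), q i = p i) ∧ ∀ i, πs (q i) = πs (x i) := by
  by_cases hn : n < k + 1
  · exact ⟨x, hx, fun i hi => by omega, fun _ => rfl⟩
  obtain ⟨s, rfl⟩ : ∃ s, n = s + (k + 1) := ⟨n - (k + 1), by omega⟩
  obtain ⟨a, ha, ha0, hak, hπ⟩ := hk _ (aux_mem_shift A X hX p hp s) _
    (aux_mem_shift A X hX x hx s) (fun i hi => by
      rw [aux_shift_iter, aux_shift_iter]; exact h _ (by omega))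
  simp only [aux_shift_iter] at ha0 hak hπ
  obtain ⟨z, hz, hz1, hz2⟩ := aux_splice A X hX p a hp ha s 0 (by rw [ha0]; rfl)
  obtain ⟨q, hq, hq1, hq2⟩ := aux_splice A X hX z x hz hx (s + k) (s + k)
    (by rw [hz2, zero_add, hak])
  refine ⟨q, hq, fun i hi => ?_, fun i => ?_⟩
  · rw [hq1 i (by omega), hz1 i (by omega)]
  · rcases le_total i (s + k) with h1 | h1
    · rw [hq1 i h1]
      rcases le_total i s with h2 | h2
      · rw [hz1 i h2, h i (by omega)]
      · obtain ⟨j, rfl⟩ := Nat.exists_eq_add_of_le h2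
        rw [hz2, zero_add, hπ j (by omega), h _ (by omega)]
    · obtain ⟨j, rfl⟩ := Nat.exists_eq_add_of_le h1
      rw [hq2]

theorem aux_right {kX kY : ℕ} (A : Fin kX → Fin kX → ℕ) (X : Set (ℕ → Fin kX))
    (hX : X = {x | ∀ n : ℕ, A (x n) (x (n + 1)) = 1})
    (πs : Fin kX → Fin kY) (k : ℕ) (hk : PMix X πs k) (p x : ℕ → Fin kX) (hp : p ∈ X)
    (hx : x ∈ X) (n m : ℕ) (h : ∀ i < m, πs (p i) = πs (x (n + i))) :
    ∃ q ∈ X, (∀ i < n, q i = x i) ∧ (∀ i < m, k + 1 ≤ i → q (n + i) = p i) ∧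
      ∀ i < n + m, πs (q i) = πs (x i) := by
  by_cases hn : m < k + 1
  · exact ⟨x, hx, fun i hi => rfl, fun i hi h2 => by omega, fun _ _ => rfl⟩
  obtain ⟨a, ha, ha0, hak, hπ⟩ := hk _ (aux_mem_shift A X hX x hx n) p hp
    (fun i hi => by rw [aux_shift_iter]; exact (h _ (by omega)).symm)
  simp only [aux_shift_iter] at ha0 hak hπ
  obtain ⟨z, hz, hz1, hz2⟩ := aux_splice A X hX x a hx ha n 0 (by rw [ha0]; rfl)
  obtain ⟨q, hq, hq1, hq2⟩ := aux_splice A X hX z p hz hp (n + k) k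
    (by rw [hz2, zero_add, hak])
  have hq3 : ∀ i, k ≤ i → q (n + i) = p i := by
    intro i hi
    obtain ⟨j, rfl⟩ := Nat.exists_eq_add_of_le hi
    rw [← add_assoc, hq2]
  refine ⟨q, hq, fun i hi => ?_, fun i hi h2 => hq3 i (by omega), fun i hi => ?_⟩
  · rw [hq1 i (by omega), hz1 i (by omega)]
  · rcases le_total i n with h1 | h1
    · rw [hq1 i (by omega), hz1 i h1]
    · obtain ⟨j, rfl⟩ := Nat.exists_eq_add_of_le h1
      rcases le_total j k with h2 | h2
      · rw [hq1 _ (by omega), hz2, zero_add, hπ j h2]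
      · rw [hq3 j h2, h j (by omega)]

theorem aux_dist {kX : ℕ} (X : Set (ℕ → Fin kX)) (f : (ℕ → Fin kX) → ℝ)
    (μ : Measure (ℕ → Fin kX)) (hμG : GibbsFun X f μ) :
    ∃ L : ℝ, 0 ≤ L ∧ ∀ n, ∀ x ∈ X, ∀ z ∈ X, (∀ i < n, x i = z i) →
      birk f n x ≤ birk f n z + L := by
  obtain ⟨P, C, hC, h⟩ := hμG
  refine ⟨max 0 (Real.log (C * C)), le_max_left _ _, fun n x hx z hz hxz => ?_⟩
  rcases Nat.eq_zero_or_pos n with rfl | hn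
  · simp [birk]
  have hcyl : cyl X x n = cyl X z n := by
    ext w
    simp only [cyl, Set.mem_setOf_eq]
    refine and_congr_right fun _ => forall₂_congr fun i hi => ?_
    rw [hxz i hi]
  have h1 := (h x hx n hn).1
  have h2 := (h z hz n hn).2
  simp only at h1 h2
  rw [hcyl] at h1
  generalize (μ (cyl X z n)).toReal = t at h1 h2
  have hE := Real.exp_pos (-(n : ℝ) * P)
  generalize Real.exp (-(n : ℝ) * P) = E at h1 h2 hE
  rw [le_div_iff₀ (by positivity)] at h1
  rw [div_le_iff₀ (by positivity)] at h2
  have h3 : C⁻¹ * (E * Real.exp (birk f n x)) ≤ C * (E * Real.exp (birk f n z)) := h1.trans h2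
  have h4 : Real.exp (birk f n x) ≤ C * C * Real.exp (birk f n z) := by
    rw [inv_mul_le_iff₀ hC] at h3
    have : E * Real.exp (birk f n x) ≤ E * (C * C * Real.exp (birk f n z)) := by linarith
    exact le_of_mul_le_mul_left this hE
  have h5 : Real.exp (birk f n x) ≤ Real.exp (birk f n z + Real.log (C * C)) := by
    rw [Real.exp_add, Real.exp_log (by positivity)]; linarith
  have := Real.exp_le_exp.1 h5
  linarith [le_max_right 0 (Real.log (C * C))]

theorem aux_bdd {kX : ℕ} (A : Fin kX → Fin kX → ℕ) (X : Set (ℕ → Fin kX))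
    (hX : X = {x | ∀ n : ℕ, A (x n) (x (n + 1)) = 1}) (f : (ℕ → Fin kX) → ℝ)
    (hf : ContinuousOn f X) : ∃ M : ℝ, 0 ≤ M ∧ ∀ x ∈ X, |f x| ≤ M := by
  have hcl : IsClosed X := by
    subst hX
    rw [Set.setOf_forall]
    refine isClosed_iInter fun n => ?_
    have hc : Continuous fun x : ℕ → Fin kX => (x n, x (n + 1)) := by fun_prop
    exact (isClosed_discrete {q : Fin kX × Fin kX | A q.1 q.2 = 1}).preimage hc
  obtain ⟨M, hM⟩ := hcl.isCompact.exists_bound_of_continuousOn hf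
  exact ⟨max 0 M, le_max_left _ _, fun x hx => (hM x hx).trans (le_max_right _ _)⟩

theorem aux_birk_bdd {kX : ℕ} (A : Fin kX → Fin kX → ℕ) (X : Set (ℕ → Fin kX))
    (hX : X = {x | ∀ n : ℕ, A (x n) (x (n + 1)) = 1}) (f : (ℕ → Fin kX) → ℝ)
    (M : ℝ) (hM : ∀ x ∈ X, |f x| ≤ M) (x : ℕ → Fin kX) (hx : x ∈ X) (n : ℕ) :
    |birk f n x| ≤ n * M := by
  unfold birk
  refine (Finset.abs_sum_le_sum_abs _ _).trans ?_
  refine (Finset.sum_le_card_nsmul _ _ M fun i _ => hM _ (aux_mem_shift A X hX x hx i)).trans ?_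
  simp

def WW {kX kY : ℕ} (X : Set (ℕ → Fin kX)) (πs : Fin kX → Fin kY)
    (f : (ℕ → Fin kX) → ℝ) (n : ℕ) (y : ℕ → Fin kY) (u : Fin n → Fin kX) : ℝ :=
  if ((∃ x ∈ X, ∀ i : Fin n, x ↑i = u i) ∧ ∀ i : Fin n, πs (u i) = y ↑i) then
    ⨆ x : ↥{z ∈ X | ∀ i : Fin n, z ↑i = u i}, Real.exp (birk f n ↑x)
  else 0

theorem aux_WW_nonneg {kX kY : ℕ} (X : Set (ℕ → Fin kX)) (πs : Fin kX → Fin kY)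
    (f : (ℕ → Fin kX) → ℝ) (n : ℕ) (y : ℕ → Fin kY) (u : Fin n → Fin kX) :
    0 ≤ WW X πs f n y u := by
  unfold WW
  split_ifs
  · exact Real.iSup_nonneg fun _ => (Real.exp_pos _).le
  · exact le_rfl

theorem aux_WW_le {kX kY : ℕ} (X : Set (ℕ → Fin kX)) (πs : Fin kX → Fin kY)
    (f : (ℕ → Fin kX) → ℝ) (n : ℕ) (y : ℕ → Fin kY) (u : Fin n → Fin kX) (B : ℝ) (hB : 0 ≤ B)
    (h : ∀ x ∈ X, (∀ i : Fin n, x ↑i = u i) → (∀ i : Fin n, πs (u i) = y ↑i) →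
      Real.exp (birk f n x) ≤ B) :
    WW X πs f n y u ≤ B := by
  unfold WW
  split_ifs with hc
  · obtain ⟨⟨x, hx, hxu⟩, hy⟩ := hc
    haveI : Nonempty ↥{z ∈ X | ∀ i : Fin n, z ↑i = u i} := ⟨⟨x, hx, hxu⟩⟩
    exact ciSup_le fun z => h z z.2.1 z.2.2 hy
  · exact hB

theorem aux_le_WW {kX kY : ℕ} (A : Fin kX → Fin kX → ℕ) (X : Set (ℕ → Fin kX))
    (hX : X = {x | ∀ n : ℕ, A (x n) (x (n + 1)) = 1}) (πs : Fin kX → Fin kY)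
    (f : (ℕ → Fin kX) → ℝ) (M : ℝ) (hM : ∀ x ∈ X, |f x| ≤ M)
    (n : ℕ) (y : ℕ → Fin kY) (u : Fin n → Fin kX) (x : ℕ → Fin kX) (hx : x ∈ X)
    (hxu : ∀ i : Fin n, x ↑i = u i) (hy : ∀ i : Fin n, πs (u i) = y ↑i) :
    Real.exp (birk f n x) ≤ WW X πs f n y u := by
  unfold WW
  rw [if_pos ⟨⟨x, hx, hxu⟩, hy⟩]
  refine le_ciSup (f := fun x : ↥{z ∈ X | ∀ i : Fin n, z ↑i = u i} => Real.exp (birk f n ↑x))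
    ?_ ⟨x, hx, hxu⟩
  refine ⟨Real.exp (n * M), ?_⟩
  rintro _ ⟨z, rfl⟩
  exact Real.exp_le_exp.2 ((le_abs_self _).trans (aux_birk_bdd A X hX f M hM z z.2.1 n))

/-- Compare Birkhoff sums of points agreeing outside the last `K` coordinates. -/
theorem aux_cmpL {kX : ℕ} (A : Fin kX → Fin kX → ℕ) (X : Set (ℕ → Fin kX))
    (hX : X = {x | ∀ n : ℕ, A (x n) (x (n + 1)) = 1})
    (f : (ℕ → Fin kX) → ℝ) (M : ℝ) (hM0 : 0 ≤ M) (hM : ∀ x ∈ X, |f x| ≤ M) (L : ℝ)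
    (hL : ∀ n, ∀ x ∈ X, ∀ z ∈ X, (∀ i < n, x i = z i) → birk f n x ≤ birk f n z + L)
    (K n : ℕ) (p q : ℕ → Fin kX) (hp : p ∈ X) (hq : q ∈ X) (h : ∀ i < n - K, q i = p i) :
    birk f n p ≤ birk f n q + (L + 2 * K * M) := by
  obtain ⟨b, hb, hbK⟩ : ∃ b, n = (n - K) + b ∧ b ≤ K := ⟨n - (n - K), by omega, by omega⟩
  have e1 := aux_birk_add f (n - K) b p
  have e2 := aux_birk_add f (n - K) b q
  rw [← hb] at e1 e2
  have h1 := abs_le.1 (aux_birk_bdd A X hX f M hM _ (aux_mem_shift A X hX p hp (n - K)) b)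
  have h2 := abs_le.1 (aux_birk_bdd A X hX f M hM _ (aux_mem_shift A X hX q hq (n - K)) b)
  have h3 := hL (n - K) p hp q hq fun i hi => (h i hi).symm
  have h4 : (b : ℝ) * M ≤ K * M := by gcongr
  linarith [h1.2, h2.1]

theorem aux_cmpR {kX : ℕ} (A : Fin kX → Fin kX → ℕ) (X : Set (ℕ → Fin kX))
    (hX : X = {x | ∀ n : ℕ, A (x n) (x (n + 1)) = 1})
    (f : (ℕ → Fin kX) → ℝ) (M : ℝ) (hM0 : 0 ≤ M) (hM : ∀ x ∈ X, |f x| ≤ M) (L : ℝ)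
    (hL : ∀ n, ∀ x ∈ X, ∀ z ∈ X, (∀ i < n, x i = z i) → birk f n x ≤ birk f n z + L)
    (K n : ℕ) (p q : ℕ → Fin kX) (hp : p ∈ X) (hq : q ∈ X)
    (h : ∀ i < n, K ≤ i → q i = p i) :
    birk f n p ≤ birk f n q + (L + 2 * K * M) := by
  obtain ⟨a, b, hb, haK, hab⟩ : ∃ a b, n = a + b ∧ a ≤ K ∧ (0 < b → a = K) :=
    ⟨min K n, n - min K n, by omega, by omega, by omega⟩
  subst hb
  rw [aux_birk_add f a b p, aux_birk_add f a b q]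
  have h1 := abs_le.1 (aux_birk_bdd A X hX f M hM _ hp a)
  have h2 := abs_le.1 (aux_birk_bdd A X hX f M hM _ hq a)
  have h3 := hL b _ (aux_mem_shift A X hX p hp a) _ (aux_mem_shift A X hX q hq a)
    (fun i hi => by
      rw [aux_shift_iter, aux_shift_iter, h (a + i) (by omega) (by omega)])
  have h4 : (a : ℝ) * M ≤ K * M := by gcongr
  linarith [h1.2, h2.1]

theorem aux_key {kX kY : ℕ} (A : Fin kX → Fin kX → ℕ) (X : Set (ℕ → Fin kX))
    (hX : X = {x | ∀ n : ℕ, A (x n) (x (n + 1)) = 1}) (πs : Fin kX → Fin kY)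
    (f : (ℕ → Fin kX) → ℝ) (M : ℝ) (hM0 : 0 ≤ M) (hM : ∀ x ∈ X, |f x| ≤ M) (L : ℝ)
    (hL : ∀ n, ∀ x ∈ X, ∀ z ∈ X, (∀ i < n, x i = z i) → birk f n x ≤ birk f n z + L)
    (k : ℕ) (hk : PMix X πs k) (n m : ℕ) (x : ℕ → Fin kX) (hx : x ∈ X)
    (u : Fin n → Fin kX) (v : Fin m → Fin kX) :
    ∃ c : Fin (n + m) → Fin kX,
      (∀ i : Fin n, (i : ℕ) < n - (k + 1) → c (Fin.castAdd m i) = u i) ∧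
      (∀ i : Fin m, k + 1 ≤ (i : ℕ) → c (Fin.natAdd n i) = v i) ∧
      WW X πs f n (πs ∘ x) u * WW X πs f m (shift^[n] (πs ∘ x)) v ≤
        Real.exp (2 * (L + 2 * (k + 1 : ℕ) * M)) * WW X πs f (n + m) (πs ∘ x) c := by
  have triv : WW X πs f n (πs ∘ x) u * WW X πs f m (shift^[n] (πs ∘ x)) v = 0 →
    ∃ c : Fin (n + m) → Fin kX,
      (∀ i : Fin n, (i : ℕ) < n - (k + 1) → c (Fin.castAdd m i) = u i) ∧
      (∀ i : Fin m, k + 1 ≤ (i : ℕ) → c (Fin.natAdd n i) = v i) ∧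
      WW X πs f n (πs ∘ x) u * WW X πs f m (shift^[n] (πs ∘ x)) v ≤
        Real.exp (2 * (L + 2 * (k + 1 : ℕ) * M)) * WW X πs f (n + m) (πs ∘ x) c := by
    intro h0
    refine ⟨Fin.append u v, fun i _ => by simp, fun i _ => by simp, ?_⟩
    rw [h0]
    exact mul_nonneg (Real.exp_pos _).le (aux_WW_nonneg ..)
  by_cases hu : (∃ x ∈ X, ∀ i : Fin n, x ↑i = u i) ∧ ∀ i : Fin n, πs (u i) = (πs ∘ x) ↑i
  swap
  · apply triv
    rw [WW, if_neg hu, zero_mul]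
  by_cases hv : (∃ x ∈ X, ∀ i : Fin m, x ↑i = v i) ∧
      ∀ i : Fin m, πs (v i) = (shift^[n] (πs ∘ x)) ↑i
  swap
  · apply triv
    rw [mul_comm, WW, if_neg hv, zero_mul]
  clear triv
  obtain ⟨⟨p, hp, hpu⟩, hu⟩ := hu
  obtain ⟨⟨r, hr, hrv⟩, hv⟩ := hv
  simp only [aux_shift_iter, Function.comp_apply] at hu hv
  obtain ⟨q₁, hq₁, ha, hb⟩ := aux_left A X hX πs k hk p x hp hx n (fun i hi => by
    rw [← hu ⟨i, hi⟩, ← hpu])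
  obtain ⟨q, hq, hc, hd, he⟩ := aux_right A X hX πs k hk r q₁ hr hq₁ n m (fun i hi => by
    rw [hb, ← hv ⟨i, hi⟩, ← hrv])
  refine ⟨fun i => q i, fun i hi => ?_, fun i hi => ?_, ?_⟩
  · simp only [Fin.val_castAdd]
    rw [hc _ i.2, ha _ hi, hpu]
  · simp only [Fin.val_natAdd]
    rw [hd _ i.2 hi, hrv]
  · have h1 : WW X πs f n (πs ∘ x) u ≤
        Real.exp (birk f n q + (L + 2 * (k + 1 : ℕ) * M)) := by
      refine aux_WW_le _ _ _ _ _ _ _ (Real.exp_pos _).le fun z hz hzu _ => ?_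
      refine Real.exp_le_exp.2 (aux_cmpL A X hX f M hM0 hM L hL (k + 1) n z q hz hq ?_)
      intro i hi
      have hin : i < n := by omega
      rw [hc _ hin, ha _ hi]
      exact (hpu ⟨i, hin⟩).trans (hzu ⟨i, hin⟩).symm
    have h2 : WW X πs f m (shift^[n] (πs ∘ x)) v ≤
        Real.exp (birk f m (shift^[n] q) + (L + 2 * (k + 1 : ℕ) * M)) := by
      refine aux_WW_le _ _ _ _ _ _ _ (Real.exp_pos _).le fun z hz hzu _ => ?_
      refine Real.exp_le_exp.2 (aux_cmpR A X hX f M hM0 hM L hL (k + 1) m z _ hz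
        (aux_mem_shift A X hX q hq n) ?_)
      intro i hi hki
      rw [aux_shift_iter, hd _ hi hki]
      exact (hrv ⟨i, hi⟩).trans (hzu ⟨i, hi⟩).symm
    have h3 := aux_le_WW A X hX πs f M hM (n + m) (πs ∘ x) (fun i => q i) q hq
      (fun _ => rfl) (fun i => by rw [he _ i.2, hb]; rfl)
    refine (mul_le_mul h1 h2 (aux_WW_nonneg ..) (Real.exp_pos _).le).trans ?_
    refine le_trans (le_of_eq ?_) (mul_le_mul_of_nonneg_left h3 (Real.exp_pos _).le)
    rw [← Real.exp_add, ← Real.exp_add, aux_birk_add]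
    congr 1
    ring

theorem aux_upper {kX kY : ℕ} (A : Fin kX → Fin kX → ℕ) (X : Set (ℕ → Fin kX))
    (hX : X = {x | ∀ n : ℕ, A (x n) (x (n + 1)) = 1}) (πs : Fin kX → Fin kY)
    (f : (ℕ → Fin kX) → ℝ) (M : ℝ) (hM : ∀ x ∈ X, |f x| ≤ M)
    (n m : ℕ) (y : ℕ → Fin kY) :
    gseq X πs f (n + m) y ≤ gseq X πs f n y * gseq X πs f m (shift^[n] y) := by
  change ∑ c, WW X πs f (n + m) y c ≤
    (∑ u, WW X πs f n y u) * ∑ v, WW X πs f m (shift^[n] y) v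
  rw [Finset.sum_mul_sum, ← Finset.sum_product', Finset.univ_product_univ]
  refine aux_sum_inj (fun c : Fin (n + m) → Fin kX =>
    ((fun i => c (Fin.castAdd m i), fun i => c (Fin.natAdd n i)) :
      (Fin n → Fin kX) × (Fin m → Fin kX))) ?_ _ _
    (fun b => mul_nonneg (aux_WW_nonneg ..) (aux_WW_nonneg ..)) ?_
  · intro c d hcd
    simp only [Prod.mk.injEq] at hcd
    funext i
    refine Fin.addCases (fun j => congrFun hcd.1 j) (fun j => congrFun hcd.2 j) i
  · intro c
    refine aux_WW_le _ _ _ _ _ _ _ (mul_nonneg (aux_WW_nonneg ..) (aux_WW_nonneg ..)) ?_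
    intro x hx hxc hy
    rw [aux_birk_add, Real.exp_add]
    refine mul_le_mul ?_ ?_ (Real.exp_pos _).le (aux_WW_nonneg ..)
    · refine aux_le_WW A X hX πs f M hM n y _ x hx (fun i => ?_) (fun i => ?_)
      · exact hxc (Fin.castAdd m i)
      · rw [hy]; rfl
    · refine aux_le_WW A X hX πs f M hM m _ _ _ (aux_mem_shift A X hX x hx n)
        (fun i => ?_) (fun i => ?_)
      · rw [aux_shift_iter]; exact hxc (Fin.natAdd n i)
      · rw [aux_shift_iter, hy]; rfl

theorem aux_lower {kX kY : ℕ} (A : Fin kX → Fin kX → ℕ) (X : Set (ℕ → Fin kX))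
    (hX : X = {x | ∀ n : ℕ, A (x n) (x (n + 1)) = 1}) (πs : Fin kX → Fin kY)
    (f : (ℕ → Fin kX) → ℝ) (M : ℝ) (hM0 : 0 ≤ M) (hM : ∀ x ∈ X, |f x| ≤ M) (L : ℝ)
    (hL : ∀ n, ∀ x ∈ X, ∀ z ∈ X, (∀ i < n, x i = z i) → birk f n x ≤ birk f n z + L)
    (k : ℕ) (hk : PMix X πs k) (n m : ℕ) (hn : 1 ≤ n) (hm : 1 ≤ m)
    (x : ℕ → Fin kX) (hx : x ∈ X) :
    gseq X πs f n (πs ∘ x) * gseq X πs f m (shift^[n] (πs ∘ x)) ≤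
      Real.exp (2 * (L + 2 * (k + 1 : ℕ) * M)) *
        (Fintype.card ((Fin (k + 1) → Fin kX) × (Fin (k + 1) → Fin kX)) : ℝ) *
        gseq X πs f (n + m) (πs ∘ x) := by
  change (∑ u, WW X πs f n (πs ∘ x) u) * (∑ v, WW X πs f m (shift^[n] (πs ∘ x)) v) ≤
    _ * _ * ∑ c, WW X πs f (n + m) (πs ∘ x) c
  rw [Finset.sum_mul_sum, ← Finset.sum_product', Finset.univ_product_univ]
  choose Φ h1 h2 h3 using fun (uv : (Fin n → Fin kX) × (Fin m → Fin kX)) =>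
    aux_key A X hX πs f M hM0 hM L hL k hk n m x hx uv.1 uv.2
  have key := aux_sum_inj
    (β := ((Fin (k + 1) → Fin kX) × (Fin (k + 1) → Fin kX)) × (Fin (n + m) → Fin kX))
    (fun uv : (Fin n → Fin kX) × (Fin m → Fin kX) =>
      ((fun j : Fin (k + 1) => uv.1 ⟨n - 1 - j, by omega⟩,
        fun j : Fin (k + 1) => uv.2 ⟨min j (m - 1), by omega⟩), Φ uv))
    (by
      intro a b hab
      simp only [Prod.mk.injEq] at hab
      obtain ⟨⟨ha, hb⟩, hc⟩ := hab
      refine Prod.ext (funext fun i => ?_) (funext fun i => ?_)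
      · by_cases hi : (i : ℕ) < n - (k + 1)
        · rw [← h1 a i hi, ← h1 b i hi, hc]
        · have := congrFun ha ⟨n - 1 - i, by omega⟩
          have e : (⟨n - 1 - (n - 1 - (i : ℕ)), by omega⟩ : Fin n) = i := by
            ext; simp only; omega
          simpa only [e] using this
      · by_cases hi : k + 1 ≤ (i : ℕ)
        · rw [← h2 a i hi, ← h2 b i hi, hc]
        · have := congrFun hb ⟨i, by omega⟩
          have e : (⟨min (i : ℕ) (m - 1), by omega⟩ : Fin m) = i := by
            ext; simp only; omega
          simpa only [e] using this)
    (fun uv => WW X πs f n (πs ∘ x) uv.1 * WW X πs f m (shift^[n] (πs ∘ x)) uv.2)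
    (fun b => Real.exp (2 * (L + 2 * (k + 1 : ℕ) * M)) * WW X πs f (n + m) (πs ∘ x) b.2)
    (fun b => mul_nonneg (Real.exp_pos _).le (aux_WW_nonneg ..))
    (fun uv => h3 uv)
  refine key.trans (le_of_eq ?_)
  rw [Fintype.sum_prod_type]
  simp only [← Finset.mul_sum, Finset.sum_const, Finset.card_univ, nsmul_eq_mul]
  ring

/-- Proposition `aafiber` (i): if `π` is fiber-wise sub-positive
mixing, then the sequence `𝓖 = {log g_n}` associated to the relative pressure function
`P(σ_X, π, f)` is almost additive on `Y`. -/
theorem stmt_19 {kX kY : ℕ}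
    (A : Fin kX → Fin kX → ℕ) (hA01 : ∀ i j, A i j = 0 ∨ A i j = 1)
    (X : Set (ℕ → Fin kX)) (hXdef : X = {x | ∀ n : ℕ, A (x n) (x (n + 1)) = 1})
    (hmix : ∃ p : ℕ, 1 ≤ p ∧ ∀ i j, 0 < ((Matrix.of A) ^ p) i j)
    (Y : Set (ℕ → Fin kY)) (hY : IsSubshift Y)
    (πs : Fin kX → Fin kY) (hsurj : (fun x => πs ∘ x) '' X = Y)
    (f : (ℕ → Fin kX) → ℝ) (hf : ContinuousOn f X)
    (μ : Measure (ℕ → Fin kX)) (hμinv : IsInvariantOn μ X) (hμG : GibbsFun X f μ)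
    (huniq : ∀ ν : Measure (ℕ → Fin kX), IsInvariantOn ν X → GibbsFun X f ν → ν = μ)
    (hfib : FiberMixing X Y πs) :
    ∃ C : ℝ, 0 < C ∧ AAOn Y (gseq X πs f) C := by
  obtain ⟨k, hk⟩ := aux_pmix X Y πs hsurj hfib
  obtain ⟨L, hL0, hL⟩ := aux_dist X f μ hμG
  obtain ⟨M, hM0, hM⟩ := aux_bdd A X hXdef f hf
  set D : ℝ := 2 * (L + 2 * (k + 1 : ℕ) * M) with hD
  have hD0 : 0 ≤ D := by positivity
  set N : ℝ := (Fintype.card ((Fin (k + 1) → Fin kX) × (Fin (k + 1) → Fin kX)) : ℝ) with hN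
  have hN0 : 0 ≤ N := by positivity
  have hg : ∀ n y, 0 ≤ gseq X πs f n y := fun n y =>
    Finset.sum_nonneg fun u _ => aux_WW_nonneg X πs f n y u
  refine ⟨D + N + 1, by positivity, ?_⟩
  intro y hy n m hn hm
  rw [← hsurj] at hy
  obtain ⟨x, hx, rfl⟩ := hy
  simp only
  constructor
  · have h := aux_lower A X hXdef πs f M hM0 hM L hL k hk n m hn hm x hx
    rw [← hD, ← hN] at h
    rw [Real.exp_neg, inv_mul_le_iff₀ (Real.exp_pos _)]
    refine h.trans (mul_le_mul_of_nonneg_right ?_ (hg _ _))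
    rw [add_assoc, Real.exp_add]
    refine mul_le_mul_of_nonneg_left ?_ (Real.exp_pos _).le
    linarith [Real.add_one_le_exp (N + 1)]
  · refine (aux_upper A X hXdef πs f M hM n m _).trans ?_
    refine le_mul_of_one_le_left (mul_nonneg (hg _ _) (hg _ _)) ?_
    exact Real.one_le_exp (by positivity)
end
end
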